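/- arXiv:math/0603284 — 4 statements merged into one kernel-verified Lean document; each statement's English description precedes it below -/
import Mathlib

section
/- Consider the market model with a bank account: let (S_t^b)_{t=0}^T, (S_t^a)_{t=0}^T be ℝ^d-valued adapted processes with 0 < S_t^{b,i} ≤ S_t^{a,i} for i=2,…,d and S_t^{b,1}=S_t^{a,1}=1, and let (Π_t) be the associated bid-ask process π_t^{ij}=S_t^{a,j}/S_t^{b,i} (i≠j), π_t^{ii}=1. Then NA^r holds if and only if there exist a probability measure Q equivalent to P and a (d−1)-dimensional Q-martingale S=(S_t)_{t=0}^T, S_t=(S_t^2,…,S_t^d), adapted to (𝔉_t), such that S_t^i(ω) ∈ ri [S_t^{b,i}(ω), S_t^{a,i}(ω)] for a.e. ω, for all i=2,…,d and t=0,…,T. -/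
open MeasureTheory Set

/-- A bid-ask matrix: positive entries, ones on the diagonal, and
`π^{ij} ≤ π^{ik} π^{kj}`. -/
def IsBidAskMatrix {d : ℕ} (M : Matrix (Fin d) (Fin d) ℝ) : Prop :=
  (∀ i j, 0 < M i j) ∧ (∀ i, M i i = 1) ∧ ∀ i j k, M i j ≤ M i k * M k j

/-- The smallest closed convex cone containing a set `S ⊆ ℝ^d`. -/
def generatedClosedCone {d : ℕ} (S : Set (Fin d → ℝ)) : Set (Fin d → ℝ) :=
  ⋂₀ {C | S ⊆ C ∧ IsClosed C ∧ Convex ℝ C ∧ ∀ x ∈ C, ∀ c : ℝ, 0 ≤ c → c • x ∈ C}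

/-- The solvency cone `K(Π)`: the closed convex cone generated by the standard
basis vectors `e_i` and the vectors `π^{ij} e_i − e_j`. -/
def solvencyCone {d : ℕ} (M : Matrix (Fin d) (Fin d) ℝ) : Set (Fin d → ℝ) :=
  generatedClosedCone
    ((Set.range fun i : Fin d => (Pi.single i 1 : Fin d → ℝ)) ∪
      {v | ∃ i j : Fin d, v = M i j • (Pi.single i 1 : Fin d → ℝ) - Pi.single j 1})

/-- `ξ ∈ L⁰(G, ℋ)`: `ξ` is `ℋ`-measurable and `ξ(ω) ∈ G(ω)` for a.e. `ω`. -/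
def MemL0 {Ω : Type*} {d : ℕ} {m : MeasurableSpace Ω} (P : Measure Ω)
    (H : MeasurableSpace Ω) (G : Ω → Set (Fin d → ℝ)) (ξ : Ω → Fin d → ℝ) : Prop :=
  Measurable[H] ξ ∧ ∀ᵐ ω ∂P, ξ ω ∈ G ω

/-- `x ∈ A_T(Π) = Σ_{t=0}^T L⁰(−K_t, 𝔉_t)`: the attainable terminal portfolios
of self-financing strategies for the bid-ask process `Π`. -/
def MemAttainable {Ω : Type*} {d T : ℕ} {m : MeasurableSpace Ω} (P : Measure Ω)
    (ℱ : Filtration (Fin (T + 1)) m)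
    (Pi_ : Fin (T + 1) → Ω → Matrix (Fin d) (Fin d) ℝ) (x : Ω → Fin d → ℝ) : Prop :=
  ∃ xs : Fin (T + 1) → Ω → Fin d → ℝ,
    (∀ t, MemL0 P (ℱ t) (fun ω => -(solvencyCone (Pi_ t ω))) (xs t)) ∧
    ∀ ω, (∑ t, xs t ω) = x ω

/-- The robust no-arbitrage condition NAʳ for a bid-ask process `Π`. -/
def RobustNoArbitrage {Ω : Type*} {d T : ℕ} {m : MeasurableSpace Ω} (P : Measure Ω)
    (ℱ : Filtration (Fin (T + 1)) m)
    (Pi_ : Fin (T + 1) → Ω → Matrix (Fin d) (Fin d) ℝ) : Prop :=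
  ∃ Pi' : Fin (T + 1) → Ω → Matrix (Fin d) (Fin d) ℝ,
    (∀ t i j, Measurable[ℱ t] fun ω => Pi' t ω i j) ∧
    (∀ t ω, IsBidAskMatrix (Pi' t ω)) ∧
    (∀ t i j, ∀ᵐ ω ∂P,
      Icc (1 / Pi' t ω j i) (Pi' t ω i j) ⊆
        intrinsicInterior ℝ (Icc (1 / Pi_ t ω j i) (Pi_ t ω i j))) ∧
    ∀ x : Ω → Fin d → ℝ, MemAttainable P ℱ Pi' x →
      MemL0 P (ℱ (Fin.last T)) (fun _ => {v | ∀ i, 0 ≤ v i}) x →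
      ∀ᵐ ω ∂P, x ω = 0

open Filter Topology in
lemma meas_comp_nat {Ω β : Type*} {G : MeasurableSpace Ω} [MeasurableSpace β]
    {f : ℕ → Ω → β} (hf : ∀ n, Measurable (f n)) {τ : Ω → ℕ} (hτ : Measurable τ) :
    Measurable fun ω => f (τ ω) ω := by
  have h : Measurable (fun p : ℕ × Ω => f p.1 p.2) := measurable_from_prod_countable_right hf
  exact h.comp (hτ.prodMk measurable_id)

open Filter Topology in
/-- One-dimensional measurable subsequence lemma. -/
lemma rand_subseq_one {Ω : Type*} {G : MeasurableSpace Ω} (x : ℕ → Ω → ℝ)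
    (hx : ∀ n, Measurable (x n)) (hb : ∀ n ω, |x n ω| ≤ 1) :
    ∃ τ : ℕ → Ω → ℕ, (∀ k, Measurable (τ k)) ∧ (∀ ω, StrictMono fun k => τ k ω) ∧
      ∃ L : Ω → ℝ, Measurable L ∧ ∀ ω, Tendsto (fun k => x (τ k ω) ω) atTop (𝓝 (L ω)) := by
  classical
  set L : Ω → ℝ := fun ω => limsup (fun n => x n ω) atTop with hL
  have hLm : Measurable L := Measurable.limsup hx
  have hbu : ∀ ω, IsBoundedUnder (· ≤ ·) atTop (fun n => x n ω) := fun ω =>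
    isBoundedUnder_of ⟨1, fun n => (abs_le.1 (hb n ω)).2⟩
  have hbl : ∀ ω, IsBoundedUnder (· ≥ ·) atTop (fun n => x n ω) := fun ω =>
    isBoundedUnder_of ⟨-1, fun n => (abs_le.1 (hb n ω)).1⟩
  have hex : ∀ ω (k p : ℕ), ∃ n, p < n ∧ |x n ω - L ω| < 1 / ((k : ℝ) + 1) := by
    intro ω k p
    have hk : (0 : ℝ) < 1 / ((k : ℝ) + 1) := by positivity
    have h1 : ∃ᶠ n in atTop, L ω - 1 / ((k : ℝ) + 1) < x n ω :=
      frequently_lt_of_lt_limsup (hbl ω).isCoboundedUnder_le (by simp only [hL]; linarith)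
    have h2 : ∀ᶠ n in atTop, x n ω < L ω + 1 / ((k : ℝ) + 1) :=
      eventually_lt_of_limsup_lt (by simp only [hL]; linarith) (hbu ω)
    obtain ⟨n, h3, h4, h5⟩ := (h1.and_eventually (h2.and (eventually_gt_atTop p))).exists
    exact ⟨n, h5, abs_lt.2 ⟨by linarith, by linarith⟩⟩
  let τ : ℕ → Ω → ℕ := fun k => Nat.rec (motive := fun _ => Ω → ℕ) (fun _ => 0)
    (fun k p ω => Nat.find (hex ω k (p ω))) k
  have hs : ∀ k ω, τ (k + 1) ω = Nat.find (hex ω k (τ k ω)) := fun k ω => rfl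
  have hspec : ∀ k ω, τ k ω < τ (k + 1) ω ∧ |x (τ (k + 1) ω) ω - L ω| < 1 / ((k : ℝ) + 1) := by
    intro k ω
    rw [hs]
    exact Nat.find_spec (hex ω k (τ k ω))
  refine ⟨τ, ?_, fun ω => strictMono_nat_of_lt_succ fun k => (hspec k ω).1, L, hLm, ?_⟩
  · intro k
    induction k with
    | zero => exact measurable_const
    | succ k ih =>
      have : τ (k + 1) = fun ω => Nat.find (hex ω k (τ k ω)) := rfl
      rw [this]
      apply measurable_find
      intro n
      exact (measurableSet_lt ih measurable_const).inter
        (measurableSet_lt ((hx n).sub hLm).abs measurable_const)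
  · intro ω
    rw [← tendsto_add_atTop_iff_nat 1, tendsto_iff_dist_tendsto_zero]
    refine squeeze_zero (fun _ => dist_nonneg) (fun k => ?_) tendsto_one_div_add_atTop_nhds_zero_nat
    rw [Real.dist_eq]
    exact (hspec k ω).2.le

open Filter Topology in
/-- Measurable subsequence lemma in `ℝ^ι`. -/
lemma rand_subseq {Ω ι : Type*} [Fintype ι] {G : MeasurableSpace Ω} (x : ℕ → Ω → ι → ℝ)
    (hx : ∀ n, Measurable (x n)) (hb : ∀ n ω, ‖x n ω‖ ≤ 1) :
    ∃ τ : ℕ → Ω → ℕ, (∀ k, Measurable (τ k)) ∧ (∀ ω, StrictMono fun k => τ k ω) ∧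
      ∃ L : Ω → ι → ℝ, Measurable L ∧ ∀ ω, Tendsto (fun k => x (τ k ω) ω) atTop (𝓝 (L ω)) := by
  classical
  have key : ∀ s : Finset ι, ∃ τ : ℕ → Ω → ℕ, (∀ k, Measurable (τ k)) ∧
      (∀ ω, StrictMono fun k => τ k ω) ∧
      ∃ L : Ω → ι → ℝ, Measurable L ∧
        ∀ ω, ∀ i ∈ s, Tendsto (fun k => x (τ k ω) ω i) atTop (𝓝 (L ω i)) := by
    intro s
    induction s using Finset.induction_on with
    | empty =>
      exact ⟨fun k _ => k, fun k => measurable_const, fun ω => strictMono_id, fun _ => 0,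
        measurable_const, by simp⟩
    | insert i s hi ih =>
      obtain ⟨τ, h1, h2, L, h3, h4⟩ := ih
      obtain ⟨ρ, g1, g2, M, g3, g4⟩ := rand_subseq_one (fun k ω => x (τ k ω) ω i)
        (fun k => (meas_comp_nat (fun n => (measurable_pi_apply i).comp (hx n)) (h1 k)))
        (fun k ω => by
          have := (norm_le_pi_norm (x (τ k ω) ω) i).trans (hb _ ω)
          simpa using this)
      refine ⟨fun k ω => τ (ρ k ω) ω, fun k => meas_comp_nat h1 (g1 k),
        fun ω => (h2 ω).comp (g2 ω), fun ω j => if j = i then M ω else L ω j, ?_, ?_⟩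
      · refine measurable_pi_lambda _ fun j => ?_
        by_cases hj : j = i
        · simpa [hj] using g3
        · simp only [hj, if_false]; exact (measurable_pi_apply j).comp h3
      · intro ω j hj
        by_cases hji : j = i
        · subst hji; simpa using g4 ω
        · have hjs : j ∈ s := by simpa [hji] using hj
          simp only [hji, if_false]
          exact (h4 ω j hjs).comp (g2 ω).tendsto_atTop
  obtain ⟨τ, h1, h2, L, h3, h4⟩ := key Finset.univ
  exact ⟨τ, h1, h2, L, h3, fun ω => tendsto_pi_nhds.2 fun i => h4 ω i (Finset.mem_univ i)⟩

open Filter Topology in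
/-- Existence of nearly norm-minimal elements in a decomposable family. -/
lemma near_min {Ω ι : Type*} [Fintype ι] {G m : MeasurableSpace Ω} (P : Measure Ω)
    [IsProbabilityMeasure P] (hG : G ≤ m) (R : Set (Ω → ι → ℝ))
    (hne : R.Nonempty) (hmeas : ∀ x ∈ R, Measurable[G] x)
    (hpaste : ∀ x : ℕ → Ω → ι → ℝ, (∀ n, x n ∈ R) → ∀ τ : Ω → ℕ, Measurable[G] τ →
      (fun ω => x (τ ω) ω) ∈ R) :
    ∃ x ∈ R, ∀ x' ∈ R, ∀ᵐ ω ∂P, ‖x ω‖ ≤ ‖x' ω‖ + 1 := by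
  classical
  let φ : ℝ → ℝ := Real.arctan
  have hφm : Measurable φ := Real.measurable_arctan
  have hint : ∀ f : Ω → ℝ, Measurable f → Integrable (fun ω => φ (f ω)) P := by
    intro f hf
    refine Integrable.of_bound (hφm.comp hf).aestronglyMeasurable (Real.pi / 2) (ae_of_all _ fun ω => ?_)
    rw [Real.norm_eq_abs, abs_le]
    exact ⟨(Real.neg_pi_div_two_lt_arctan _).le, (Real.arctan_lt_pi_div_two _).le⟩
  have hnm : ∀ x ∈ R, Measurable[G] fun ω => ‖x ω‖ := fun x hx =>
    measurable_norm.comp (hmeas x hx)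
  have hnm' : ∀ x ∈ R, Measurable[m] fun ω => ‖x ω‖ := fun x hx => (hnm x hx).mono hG le_rfl
  let I : (Ω → ι → ℝ) → ℝ := fun x => ∫ ω, φ ‖x ω‖ ∂P
  have hI0 : ∀ x, 0 ≤ I x := fun x => integral_nonneg fun ω =>
    Real.arctan_nonneg.2 (norm_nonneg _)
  have hbdd : BddBelow (I '' R) := ⟨0, by rintro _ ⟨x, -, rfl⟩; exact hI0 x⟩
  obtain ⟨u, -, hu, huS⟩ := exists_seq_tendsto_sInf (hne.image I) hbdd
  choose x hxR hxu using huS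
  let r : Ω → ℝ := fun ω => ⨅ k, ‖x k ω‖
  have hbr : ∀ ω, BddBelow (range fun k => ‖x k ω‖) := fun ω =>
    ⟨0, by rintro _ ⟨k, rfl⟩; exact norm_nonneg _⟩
  have hrm : Measurable[G] r := Measurable.iInf fun k => hnm _ (hxR k)
  have hrle : ∀ k ω, r ω ≤ ‖x k ω‖ := fun k ω => ciInf_le (hbr ω) k
  have hex : ∀ ω, ∃ k, ‖x k ω‖ < r ω + 1 := fun ω =>
    exists_lt_of_ciInf_lt (show r ω < r ω + 1 by linarith)
  have hτ : Measurable[G] fun ω => Nat.find (hex ω) := by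
    refine @measurable_find Ω G _ _ hex fun k => ?_
    exact measurableSet_lt (hnm _ (hxR k)) (hrm.add_const 1)
  refine ⟨_, hpaste x hxR _ hτ, fun x' hx' => ?_⟩
  have main : ∀ᵐ ω ∂P, r ω ≤ ‖x' ω‖ := by
    let ψ : Ω → ℝ := fun ω => max (φ (r ω) - φ ‖x' ω‖) 0
    have hψi : Integrable ψ P :=
      ((hint r (hrm.mono hG le_rfl)).sub (hint _ (hnm' _ hx'))).pos_part
    have hle : ∀ k, ∫ ω, ψ ω ∂P ≤ u k - sInf (I '' R) := by
      intro k
      let σ : Ω → ℕ := fun ω => if ‖x' ω‖ < ‖x k ω‖ then 0 else 1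
      have hσ : Measurable[G] σ := by
        refine Measurable.ite ?_ measurable_const measurable_const
        exact measurableSet_lt (hnm _ hx') (hnm _ (hxR k))
      have hz := hpaste (fun n => if n = 0 then x' else x k) (fun n => by
        by_cases h : n = 0 <;> simp [h, hx', hxR k]) σ hσ
      set z : Ω → ι → ℝ := fun ω => (if σ ω = 0 then x' else x k) ω with hzdef
      have h1 : sInf (I '' R) ≤ I z := csInf_le hbdd ⟨_, hz, rfl⟩
      have h2 : ∫ ω, ψ ω ∂P ≤ ∫ ω, (φ ‖x k ω‖ - φ ‖z ω‖) ∂P := by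
        refine integral_mono hψi ((hint _ (hnm' _ (hxR k))).sub (hint _ (hnm' _ hz))) fun ω => ?_
        simp only [ψ, hzdef, σ]
        by_cases h : ‖x' ω‖ < ‖x k ω‖
        · have e1 : φ (r ω) ≤ φ ‖x k ω‖ := Real.arctan_strictMono.monotone (hrle k ω)
          have e2 : φ ‖x' ω‖ ≤ φ ‖x k ω‖ := Real.arctan_strictMono.monotone h.le
          simp only [h, if_true]
          exact max_le (by linarith) (by linarith)
        · have e1 : φ (r ω) ≤ φ ‖x' ω‖ :=
            Real.arctan_strictMono.monotone ((hrle k ω).trans (not_lt.1 h))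
          simp only [h, if_false]
          norm_num
          exact e1
      rw [integral_sub (hint _ (hnm' _ (hxR k))) (hint _ (hnm' _ hz))] at h2
      rw [← hxu k]
      simp only [I] at h1 ⊢
      linarith
    have h0 : ∫ ω, ψ ω ∂P ≤ 0 := by
      have := ge_of_tendsto' (hu.sub_const (sInf (I '' R))) hle
      simpa using this
    have hψ0 : 0 ≤ ψ := fun ω => le_max_right _ _
    have h1 : ∫ ω, ψ ω ∂P = 0 := le_antisymm h0 (integral_nonneg hψ0)
    have h2 := (integral_eq_zero_iff_of_nonneg hψ0 hψi).1 h1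
    filter_upwards [h2] with ω hω
    by_contra hlt
    have e1 : φ ‖x' ω‖ < φ (r ω) := Real.arctan_strictMono (not_le.1 hlt)
    have e2 : ψ ω = 0 := hω
    have e3 : φ (r ω) - φ ‖x' ω‖ ≤ ψ ω := le_max_left _ _
    linarith
  filter_upwards [main] with ω hω
  have := Nat.find_spec (hex ω)
  linarith

open Filter Topology in
/-- A set of `F`-measurable random vectors which is a convex cone over the nonnegative
`G`-measurable scalars and is closed under a.e. convergence of sequences. -/
structure ClosedL0Cone {Ω ι : Type*} [Fintype ι] (G F : MeasurableSpace Ω) {m : MeasurableSpace Ω}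
    (P : Measure Ω) (A : Set (Ω → ι → ℝ)) : Prop where
  meas : ∀ x ∈ A, Measurable[F] x
  zero : (fun _ => 0) ∈ A
  add : ∀ x ∈ A, ∀ y ∈ A, (fun ω => x ω + y ω) ∈ A
  smul : ∀ c : Ω → ℝ, Measurable[G] c → (∀ ω, 0 ≤ c ω) → ∀ x ∈ A, (fun ω => c ω • x ω) ∈ A
  lim : ∀ (x : ℕ → Ω → ι → ℝ) (y : Ω → ι → ℝ), (∀ n, x n ∈ A) → Measurable[F] y →
    (∀ᵐ ω ∂P, Tendsto (fun n => x n ω) atTop (𝓝 (y ω))) → y ∈ A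

lemma ClosedL0Cone.congr {Ω ι : Type*} [Fintype ι] {G F m : MeasurableSpace Ω}
    {P : Measure Ω} {A : Set (Ω → ι → ℝ)} (hA : ClosedL0Cone G F P A) {x y : Ω → ι → ℝ}
    (hx : x ∈ A) (hy : Measurable[F] y) (h : ∀ᵐ ω ∂P, x ω = y ω) : y ∈ A := by
  refine hA.lim (fun _ => x) y (fun _ => hx) hy ?_
  filter_upwards [h] with ω hω
  rw [hω]; exact tendsto_const_nhds

lemma ClosedL0Cone.mono {Ω ι : Type*} [Fintype ι] {G G' F m : MeasurableSpace Ω}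
    {P : Measure Ω} {A : Set (Ω → ι → ℝ)} (hA : ClosedL0Cone G F P A) (h : G' ≤ G) :
    ClosedL0Cone G' F P A where
  meas := hA.meas
  zero := hA.zero
  add := hA.add
  smul := fun c hc => hA.smul c (hc.mono h le_rfl)
  lim := hA.lim

lemma ClosedL0Cone.sum {Ω ι κ : Type*} [Fintype ι] {G F m : MeasurableSpace Ω}
    {P : Measure Ω} {A : Set (Ω → ι → ℝ)} (hA : ClosedL0Cone G F P A) (s : Finset κ)
    (x : κ → Ω → ι → ℝ) (hx : ∀ k ∈ s, x k ∈ A) : (fun ω => ∑ k ∈ s, x k ω) ∈ A := by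
  classical
  induction s using Finset.induction_on with
  | empty => simpa using hA.zero
  | insert k s hk ih =>
    simp only [Finset.sum_insert hk]
    exact hA.add _ (hx k (by simp)) _ (ih fun j hj => hx j (by simp [hj]))

open Filter Topology in
lemma ClosedL0Cone.paste {Ω ι : Type*} [Fintype ι] {G F m : MeasurableSpace Ω}
    {P : Measure Ω} {A : Set (Ω → ι → ℝ)} (hA : ClosedL0Cone G F P A) (hGF : G ≤ F)
    (x : ℕ → Ω → ι → ℝ) (hx : ∀ n, x n ∈ A) (τ : Ω → ℕ) (hτ : Measurable[G] τ) :
    (fun ω => x (τ ω) ω) ∈ A := by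
  classical
  refine hA.lim (fun N ω => ∑ n ∈ Finset.range N, (if τ ω = n then (1 : ℝ) else 0) • x n ω) _ ?_
    (meas_comp_nat (G := F) (fun n => hA.meas _ (hx n)) (hτ.mono hGF le_rfl)) ?_
  · intro N
    refine hA.sum _ (fun n ω => (if τ ω = n then (1 : ℝ) else 0) • x n ω) fun n _ => ?_
    refine hA.smul (fun ω => if τ ω = n then (1 : ℝ) else 0) ?_ (fun ω => by split_ifs <;> norm_num)
      _ (hx n)
    exact Measurable.ite (hτ (measurableSet_singleton n)) measurable_const measurable_const
  · refine ae_of_all _ fun ω => ?_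
    refine tendsto_const_nhds.congr' ?_
    filter_upwards [eventually_gt_atTop (τ ω)] with N hN
    rw [Finset.sum_eq_single (τ ω)]
    · simp
    · intro n _ hn; simp [Ne.symm hn]
    · intro h; simp at h; omega

open Filter Topology in
/-- The key closedness result: the sum of two closed cones is closed under a linearity condition. -/
lemma ClosedL0Cone.add_closed {Ω ι : Type*} [Fintype ι] {G m : MeasurableSpace Ω}
    {P : Measure Ω} [IsProbabilityMeasure P] (hG : G ≤ m) {C A : Set (Ω → ι → ℝ)}
    (hC : ClosedL0Cone G G P C) (hA : ClosedL0Cone G m P A)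
    (hN : ∀ y ∈ C, (fun ω => - y ω) ∈ A → (fun ω => - y ω) ∈ C ∧ y ∈ A) :
    ClosedL0Cone G m P {g | ∃ x ∈ C, ∃ h ∈ A, g = fun ω => x ω + h ω} where
  meas := by
    rintro _ ⟨x, hx, h, hh, rfl⟩
    exact ((hC.meas x hx).mono hG le_rfl).add (hA.meas h hh)
  zero := ⟨_, hC.zero, _, hA.zero, by simp⟩
  add := by
    rintro _ ⟨x, hx, h, hh, rfl⟩ _ ⟨x', hx', h', hh', rfl⟩
    exact ⟨_, hC.add x hx x' hx', _, hA.add h hh h' hh', by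
      funext ω; exact add_add_add_comm _ _ _ _⟩
  smul := by
    rintro c hc hc0 _ ⟨x, hx, h, hh, rfl⟩
    exact ⟨_, hC.smul c hc hc0 x hx, _, hA.smul c hc hc0 h hh, by funext ω; simp only [smul_add]⟩
  lim := by
    classical
    intro g y₀ hg hy₀ hlim
    -- near minimal representations
    have hrep : ∀ n, ∃ x ∈ C, (fun ω => g n ω - x ω) ∈ A ∧
        ∀ x' ∈ C, (fun ω => g n ω - x' ω) ∈ A → ∀ᵐ ω ∂P, ‖x ω‖ ≤ ‖x' ω‖ + 1 := by
      intro n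
      obtain ⟨x, hxR, hmin⟩ := near_min P hG {x | x ∈ C ∧ (fun ω => g n ω - x ω) ∈ A}
        (by
          obtain ⟨x, hx, h, hh, e⟩ := hg n
          refine ⟨x, hx, ?_⟩
          rw [e]; simpa using hh)
        (fun x hx => hC.meas x hx.1)
        (fun x hx τ hτ => ⟨hC.paste le_rfl x (fun k => (hx k).1) τ hτ,
          hA.paste hG (fun k ω => g n ω - x k ω) (fun k => (hx k).2) τ hτ⟩)
      exact ⟨x, hxR.1, hxR.2, fun x' h1 h2 => hmin x' ⟨h1, h2⟩⟩
    choose x hxC hxA hmin using hrep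
    let w : ℕ → Ω → ℝ := fun n ω => (1 + ‖x n ω‖)⁻¹
    have hw0 : ∀ n ω, 0 < 1 + ‖x n ω‖ := fun n ω => by positivity
    have hnm : ∀ n, Measurable[G] fun ω => ‖x n ω‖ := fun n =>
      measurable_norm.comp (hC.meas _ (hxC n))
    have hwm : ∀ n, Measurable[G] (w n) := fun n =>
      ((hnm n).const_add 1).inv
    have hwpos : ∀ n ω, 0 < w n ω := fun n ω => inv_pos.2 (hw0 n ω)
    let u : ℕ → Ω → ι → ℝ := fun n ω => w n ω • x n ω
    have huC : ∀ n, u n ∈ C := fun n => hC.smul _ (hwm n) (fun ω => (hwpos n ω).le) _ (hxC n)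
    have hun : ∀ n ω, ‖u n ω‖ = 1 - w n ω := by
      intro n ω
      simp only [u, norm_smul, Real.norm_eq_abs, abs_of_pos (hwpos n ω)]
      simp only [w]
      have := (hw0 n ω).ne'
      field_simp
      ring
    obtain ⟨τ, hτm, hτs, y, hym, hy⟩ := rand_subseq (G := G) u (fun n => hC.meas _ (huC n))
      (fun n ω => by rw [hun]; linarith [hwpos n ω])
    have hynorm : ∀ ω, Tendsto (fun k => w (τ k ω) ω) atTop (𝓝 (1 - ‖y ω‖)) := by
      intro ω
      have h1 := (hy ω).norm
      have h2 : (fun k => w (τ k ω) ω) = fun k => 1 - ‖u (τ k ω) ω‖ := by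
        funext k; rw [hun]; ring
      rw [h2]
      exact h1.const_sub 1
    have hyle : ∀ ω, ‖y ω‖ ≤ 1 := by
      intro ω
      have := ge_of_tendsto' (hynorm ω) fun k => (hwpos (τ k ω) ω).le
      linarith
    have hgτ : ∀ᵐ ω ∂P, Tendsto (fun k => g (τ k ω) ω) atTop (𝓝 (y₀ ω)) := by
      filter_upwards [hlim] with ω hω
      exact hω.comp (hτs ω).tendsto_atTop
    have hynm : Measurable[G] fun ω => ‖y ω‖ := measurable_norm.comp hym
    -- the bad set
    let ind : Ω → ℝ := fun ω => if ‖y ω‖ = 1 then 1 else 0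
    have hindm : Measurable[G] ind :=
      Measurable.ite (hynm (measurableSet_singleton 1)) measurable_const measurable_const
    have hind0 : ∀ ω, 0 ≤ ind ω := fun ω => by simp only [ind]; split_ifs <;> norm_num
    let z : Ω → ι → ℝ := fun ω => ind ω • y ω
    have hzm : Measurable[G] z := hindm.smul hym
    have hzC : z ∈ C := by
      refine hC.lim (fun k ω => ind ω • u (τ k ω) ω) z (fun k => ?_) hzm
        (ae_of_all _ fun ω => (hy ω).const_smul _)
      exact hC.smul ind hindm hind0 _ (hC.paste le_rfl u huC (τ k) (hτm k))
    have hzA : (fun ω => - z ω) ∈ A := by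
      refine hA.lim (fun k ω => ind ω • (w (τ k ω) ω • (g (τ k ω) ω - x (τ k ω) ω))) _
        (fun k => ?_) ((hzm.mono hG le_rfl).neg) ?_
      · refine hA.smul ind hindm hind0 _ ?_
        exact hA.smul (fun ω => w (τ k ω) ω) (meas_comp_nat (G := G) hwm (hτm k))
          (fun ω => (hwpos _ ω).le) _
          (hA.paste hG (fun n ω => g n ω - x n ω) hxA (τ k) (hτm k))
      · filter_upwards [hgτ] with ω hω
        by_cases h1 : ‖y ω‖ = 1
        · have e1 : ind ω = 1 := by simp [ind, h1]
          have e2 : z ω = y ω := by simp [z, e1]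
          have h2 := hynorm ω
          rw [h1, sub_self] at h2
          have h3 := (h2.smul hω).sub (hy ω)
          rw [e2]
          simpa [e1, smul_sub, u] using h3
        · have e1 : ind ω = 0 := by simp [ind, h1]
          simp [z, e1]
    obtain ⟨hzC', hzA'⟩ := hN z hzC hzA
    have hbad : ∀ᵐ ω ∂P, ‖y ω‖ ≠ 1 := by
      have hall : ∀ n, ∀ᵐ ω ∂P, ‖x n ω‖ ≤ ‖x n ω + (1 + ‖x n ω‖) • - z ω‖ + 1 := by
        intro n
        refine hmin n (fun ω => x n ω + (1 + ‖x n ω‖) • - z ω) ?_ ?_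
        · exact hC.add _ (hxC n) _ (hC.smul (fun ω => 1 + ‖x n ω‖) ((hnm n).const_add 1)
            (fun ω => (hw0 n ω).le) _ hzC')
        · have := hA.add _ (hxA n) _ (hA.smul (fun ω => 1 + ‖x n ω‖) ((hnm n).const_add 1)
            (fun ω => (hw0 n ω).le) _ hzA')
          convert this using 2 with ω
          rw [smul_neg]; abel
      filter_upwards [ae_all_iff.2 hall] with ω hω h1
      have e2 : z ω = y ω := by simp [z, ind, h1]
      rw [e2] at hω
      have hle : ∀ n, ‖u n ω‖ ≤ ‖u n ω - y ω‖ + w n ω := by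
        intro n
        have h3 := mul_le_mul_of_nonneg_left (hω n) (hwpos n ω).le
        have h4 : ‖u n ω‖ = w n ω * ‖x n ω‖ := by
          simp only [u, norm_smul, Real.norm_eq_abs, abs_of_pos (hwpos n ω)]
        have h5 : u n ω - y ω = w n ω • (x n ω + (1 + ‖x n ω‖) • - y ω) := by
          rw [smul_add, smul_smul, show w n ω * (1 + ‖x n ω‖) = 1 from inv_mul_cancel₀ (hw0 n ω).ne']
          simp [u, sub_eq_add_neg]
        rw [h4, h5, norm_smul, Real.norm_eq_abs, abs_of_pos (hwpos n ω)]
        linarith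
      have h6 := (hy ω).norm
      have h7 := (((hy ω).sub_const (y ω)).norm).add (hynorm ω)
      have h8 := le_of_tendsto_of_tendsto' h6 h7 fun k => hle (τ k ω)
      simp [h1] at h8
      linarith
    -- the limit
    let X : Ω → ι → ℝ := fun ω => (1 - ‖y ω‖)⁻¹ • y ω
    have hXm : Measurable[G] X := ((hynm.const_sub 1).inv).smul hym
    have hXlim : ∀ᵐ ω ∂P, Tendsto (fun k => x (τ k ω) ω) atTop (𝓝 (X ω)) := by
      filter_upwards [hbad] with ω hω
      have h1 : 1 - ‖y ω‖ ≠ 0 := fun h => hω (by linarith)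
      have h2 := ((hynorm ω).inv₀ h1).smul (hy ω)
      refine h2.congr fun k => ?_
      simp only [u, smul_smul, inv_mul_cancel₀ (hwpos (τ k ω) ω).ne', one_smul]
    have hXC : X ∈ C := hC.lim (fun k ω => x (τ k ω) ω) X
      (fun k => hC.paste le_rfl x hxC (τ k) (hτm k)) hXm hXlim
    refine ⟨X, hXC, fun ω => y₀ ω - X ω, ?_, by funext ω; simp⟩
    refine hA.lim (fun k ω => g (τ k ω) ω - x (τ k ω) ω) _
      (fun k => hA.paste hG (fun n ω => g n ω - x n ω) hxA (τ k) (hτm k))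
      (hy₀.sub (hXm.mono hG le_rfl)) ?_
    filter_upwards [hgτ, hXlim] with ω h1 h2
    exact h1.sub h2

/-- Value in cash of the (self-financing) acquisition of the portfolio `x`. -/
def costF {d : ℕ} (a b : Fin d → ℝ) (x : Fin (d + 1) → ℝ) : ℝ :=
  x 0 + ∑ i : Fin d, max (a i * x i.succ) (b i * x i.succ)

lemma costF_continuous {d : ℕ} (a b : Fin d → ℝ) : Continuous (costF a b) := by
  unfold costF
  fun_prop

lemma costF_add_le {d : ℕ} (a b : Fin d → ℝ) (x y : Fin (d + 1) → ℝ) :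
    costF a b (x + y) ≤ costF a b x + costF a b y := by
  unfold costF
  have : ∑ i : Fin d, max (a i * (x + y) i.succ) (b i * (x + y) i.succ) ≤
      ∑ i : Fin d, (max (a i * x i.succ) (b i * x i.succ) +
        max (a i * y i.succ) (b i * y i.succ)) := by
    refine Finset.sum_le_sum fun i _ => ?_
    simp only [Pi.add_apply, mul_add]
    exact max_add_add_le_max_add_max
  rw [Finset.sum_add_distrib] at this
  simp only [Pi.add_apply] at *
  linarith

lemma costF_smul {d : ℕ} (a b : Fin d → ℝ) (c : ℝ) (hc : 0 ≤ c) (x : Fin (d + 1) → ℝ) :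
    costF a b (c • x) = c * costF a b x := by
  unfold costF
  simp only [Pi.smul_apply, smul_eq_mul, mul_add, Finset.mul_sum]
  congr 1
  refine Finset.sum_congr rfl fun i _ => ?_
  rw [mul_max_of_nonneg _ _ hc]
  congr 1 <;> ring

lemma costF_measurable {Ω : Type*} {G : MeasurableSpace Ω} {d : ℕ} {a b : Ω → Fin d → ℝ}
    {x : Ω → Fin (d + 1) → ℝ} (ha : ∀ i, Measurable fun ω => a ω i)
    (hb : ∀ i, Measurable fun ω => b ω i) (hx : Measurable x) :
    Measurable fun ω => costF (a ω) (b ω) (x ω) := by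
  unfold costF
  have hx' : ∀ i, Measurable fun ω => x ω i := fun i => (measurable_pi_apply i).comp hx
  refine (hx' 0).add (Finset.measurable_sum _ fun i _ => ?_)
  exact ((ha i).mul (hx' _)).max ((hb i).mul (hx' _))

lemma costF_mono {d : ℕ} {a b a' b' : Fin d → ℝ} (hab : ∀ i, b i ≤ b' i ∧ b' i ≤ a' i ∧ a' i ≤ a i)
    (x : Fin (d + 1) → ℝ) (i : Fin d) :
    max (a' i * x i.succ) (b' i * x i.succ) ≤ max (a i * x i.succ) (b i * x i.succ) := by
  obtain ⟨h1, h2, h3⟩ := hab i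
  rcases le_total 0 (x i.succ) with h | h
  · exact le_max_of_le_left (max_le (mul_le_mul_of_nonneg_right h3 h)
      (mul_le_mul_of_nonneg_right (h2.trans h3) h))
  · exact le_max_of_le_right (max_le (mul_le_mul_of_nonpos_right (h1.trans h2) h)
      (mul_le_mul_of_nonpos_right h1 h))

lemma costF_le {d : ℕ} {a b a' b' : Fin d → ℝ} (hab : ∀ i, b i ≤ b' i ∧ b' i ≤ a' i ∧ a' i ≤ a i)
    (x : Fin (d + 1) → ℝ) : costF a' b' x ≤ costF a b x := by
  unfold costF
  have := Finset.sum_le_sum fun (i : Fin d) (_ : i ∈ Finset.univ) => costF_mono hab x i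
  linarith

lemma costF_neg {d : ℕ} {a b a' b' : Fin d → ℝ} (hab : ∀ i, b i ≤ b' i ∧ b' i ≤ a' i ∧ a' i ≤ a i)
    (hst : ∀ i, (b i < b' i ∧ a' i < a i) ∨ b i = a i)
    (x : Fin (d + 1) → ℝ) (h' : costF a' b' x = 0) (h : costF a b x ≤ 0) :
    costF a b (-x) ≤ 0 := by
  have h0 : costF a b x = 0 := le_antisymm h (h' ▸ costF_le hab x)
  have hsum : ∑ i : Fin d, max (a' i * x i.succ) (b' i * x i.succ) =
      ∑ i : Fin d, max (a i * x i.succ) (b i * x i.succ) := by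
    unfold costF at h0 h'; linarith
  have hterm := (Finset.sum_eq_sum_iff_of_le fun i _ => costF_mono hab x i).1 hsum
  have hneg : ∀ i, max (a i * (-x) i.succ) (b i * (-x) i.succ) =
      - max (a i * x i.succ) (b i * x i.succ) := by
    intro i
    rcases hst i with ⟨h1, h2⟩ | h1
    · have e := hterm i (Finset.mem_univ i)
      have hx : x i.succ = 0 := by
        obtain ⟨g1, g2, g3⟩ := hab i
        by_contra hne
        rcases lt_or_gt_of_ne hne with hlt | hgt
        · have q1 : max (a' i * x i.succ) (b' i * x i.succ) < b i * x i.succ :=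
            max_lt (mul_lt_mul_of_neg_right (h1.trans_le g2) hlt) (mul_lt_mul_of_neg_right h1 hlt)
          exact absurd e (ne_of_lt (q1.trans_le (le_max_right _ _)))
        · have q1 : max (a' i * x i.succ) (b' i * x i.succ) < a i * x i.succ :=
            max_lt (mul_lt_mul_of_pos_right h2 hgt) (mul_lt_mul_of_pos_right (g2.trans_lt h2) hgt)
          exact absurd e (ne_of_lt (q1.trans_le (le_max_left _ _)))
      simp [hx]
    · simp [h1]
  have : costF a b (-x) = - costF a b x := by
    unfold costF
    rw [Finset.sum_congr rfl fun i _ => hneg i, Finset.sum_neg_distrib, Pi.neg_apply]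
    ring
  linarith

open Filter Topology in
lemma closedL0Cone_cost {Ω : Type*} {G m : MeasurableSpace Ω} (P : Measure Ω) {d : ℕ}
    (a b : Ω → Fin d → ℝ) : ClosedL0Cone G G P
      {x : Ω → Fin (d + 1) → ℝ | Measurable[G] x ∧ ∀ᵐ ω ∂P, costF (a ω) (b ω) (x ω) ≤ 0} where
  meas := fun x hx => hx.1
  zero := ⟨measurable_const, ae_of_all _ fun ω => by simp [costF]⟩
  add := by
    rintro x ⟨hx, hx'⟩ y ⟨hy, hy'⟩
    refine ⟨hx.add hy, ?_⟩
    filter_upwards [hx', hy'] with ω h1 h2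
    exact (costF_add_le _ _ _ _).trans (by linarith)
  smul := by
    rintro c hc hc0 x ⟨hx, hx'⟩
    refine ⟨hc.smul hx, ?_⟩
    filter_upwards [hx'] with ω h1
    rw [costF_smul _ _ _ (hc0 ω)]
    exact mul_nonpos_of_nonneg_of_nonpos (hc0 ω) h1
  lim := by
    intro x y hx hy hlim
    refine ⟨hy, ?_⟩
    filter_upwards [hlim, ae_all_iff.2 fun n => (hx n).2] with ω h1 h2
    exact le_of_tendsto' (((costF_continuous _ _).tendsto _).comp h1) h2

open Filter Topology in
lemma closedL0Cone_nonpos {Ω ι : Type*} [Fintype ι] {m : MeasurableSpace Ω} (P : Measure Ω) :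
    ClosedL0Cone m m P
      {x : Ω → ι → ℝ | Measurable x ∧ ∀ᵐ ω ∂P, ∀ i, x ω i ≤ 0} where
  meas := fun x hx => hx.1
  zero := ⟨measurable_const, ae_of_all _ fun ω => by simp⟩
  add := by
    rintro x ⟨hx, hx'⟩ y ⟨hy, hy'⟩
    refine ⟨hx.add hy, ?_⟩
    filter_upwards [hx', hy'] with ω h1 h2 i
    exact add_nonpos (h1 i) (h2 i)
  smul := by
    rintro c hc hc0 x ⟨hx, hx'⟩
    refine ⟨hc.smul hx, ?_⟩
    filter_upwards [hx'] with ω h1 i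
    exact mul_nonpos_of_nonneg_of_nonpos (hc0 ω) (h1 i)
  lim := by
    intro x y hx hy hlim
    refine ⟨hy, ?_⟩
    filter_upwards [hlim, ae_all_iff.2 fun n => (hx n).2] with ω h1 h2 i
    exact le_of_tendsto' (tendsto_pi_nhds.1 h1 i) fun n => h2 n i

/-- Closedness of the set of super-replicable claims, together with the no-arbitrage property. -/
lemma attainable_closed {Ω : Type*} {d T : ℕ} {m : MeasurableSpace Ω} (P : Measure Ω)
    [IsProbabilityMeasure P] (ℱ : Filtration (Fin (T + 1)) m)
    (a b a' b' : Fin (T + 1) → Ω → Fin d → ℝ)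
    (ha' : ∀ t i, Measurable[ℱ t] fun ω => a' t ω i)
    (hb' : ∀ t i, Measurable[ℱ t] fun ω => b' t ω i)
    (hab : ∀ t, ∀ᵐ ω ∂P, ∀ i, b t ω i ≤ b' t ω i ∧ b' t ω i ≤ a' t ω i ∧ a' t ω i ≤ a t ω i)
    (hst : ∀ t, ∀ᵐ ω ∂P, ∀ i, (b t ω i < b' t ω i ∧ a' t ω i < a t ω i) ∨ b t ω i = a t ω i)
    (hNA : ∀ z : Fin (T + 1) → Ω → Fin (d + 1) → ℝ, (∀ t, Measurable[ℱ t] (z t)) →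
      (∀ t, ∀ᵐ ω ∂P, costF (a' t ω) (b' t ω) (z t ω) ≤ 0) →
      (∀ᵐ ω ∂P, ∀ i, 0 ≤ (∑ t, z t ω) i) → ∀ᵐ ω ∂P, ∑ t, z t ω = 0) :
    ∃ A : Set (Ω → Fin (d + 1) → ℝ), ClosedL0Cone (ℱ 0) m P A ∧
      (∀ t x, Measurable[ℱ t] x → (∀ᵐ ω ∂P, costF (a t ω) (b t ω) (x ω) ≤ 0) → x ∈ A) ∧
      (∀ x : Ω → Fin (d + 1) → ℝ, Measurable x → (∀ᵐ ω ∂P, ∀ i, x ω i ≤ 0) → x ∈ A) ∧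
      (∀ x ∈ A, (∀ᵐ ω ∂P, ∀ i, 0 ≤ x ω i) → ∀ᵐ ω ∂P, x ω = 0) := by
  classical
  let C : Fin (T + 1) → Set (Ω → Fin (d + 1) → ℝ) := fun t =>
    {x | Measurable[ℱ t] x ∧ ∀ᵐ ω ∂P, costF (a t ω) (b t ω) (x ω) ≤ 0}
  let K : Set (Ω → Fin (d + 1) → ℝ) := {x | Measurable x ∧ ∀ᵐ ω ∂P, ∀ i, x ω i ≤ 0}
  have hC : ∀ t, ClosedL0Cone (ℱ t) (ℱ t) P (C t) := fun t => closedL0Cone_cost P (a t) (b t)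
  have hK : ClosedL0Cone m m P K := closedL0Cone_nonpos P
  have hC' : ∀ t, ∀ x ∈ C t, ∀ᵐ ω ∂P, costF (a' t ω) (b' t ω) (x ω) ≤ 0 := by
    intro t x hx
    filter_upwards [hx.2, hab t] with ω h1 h2
    exact (costF_le h2 _).trans h1
  have hzero : ∀ y : Fin (T + 1) → Ω → Fin (d + 1) → ℝ, (∀ t, y t ∈ C t) →
      (∀ᵐ ω ∂P, ∀ i, 0 ≤ (∑ t, y t ω) i) → ∀ᵐ ω ∂P, ∑ t, y t ω = 0 := fun y hy h =>
    hNA y (fun t => (hy t).1) (fun t => hC' t _ (hy t)) h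
  have hnull : ∀ (y : Fin (T + 1) → Ω → Fin (d + 1) → ℝ) (k : Ω → Fin (d + 1) → ℝ),
      (∀ t, y t ∈ C t) → k ∈ K → (∀ ω, ∑ t, y t ω + k ω = 0) →
      (∀ t, (fun ω => - y t ω) ∈ C t) ∧ (fun ω => - k ω) ∈ K := by
    intro y k hy hk hs
    have hk' : ∀ ω, ∑ t, y t ω = - k ω := fun ω => eq_neg_of_add_eq_zero_left (hs ω)
    have h0 : ∀ᵐ ω ∂P, ∑ t, y t ω = 0 := by
      refine hzero y hy ?_
      filter_upwards [hk.2] with ω h i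
      rw [hk' ω]
      simpa using h i
    let z : Fin (T + 1) → Ω → Fin (d + 1) → ℝ := fun t ω =>
      y t ω - costF (a' t ω) (b' t ω) (y t ω) • Pi.single 0 1
    have hcz : ∀ t ω, costF (a' t ω) (b' t ω) (z t ω) = 0 := by
      intro t ω
      simp [z, costF, Fin.succ_ne_zero]
    have hz := hNA z (fun t => ((hy t).1).sub
      ((costF_measurable (ha' t) (hb' t) (hy t).1).smul measurable_const))
      (fun t => ae_of_all _ fun ω => (hcz t ω).le) (by
        filter_upwards [h0, ae_all_iff.2 fun t => hC' t _ (hy t)] with ω h1 h2 i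
        simp only [z, Finset.sum_sub_distrib, h1, ← Finset.sum_smul]
        have : ∑ t, costF (a' t ω) (b' t ω) (y t ω) ≤ 0 := Finset.sum_nonpos fun t _ => h2 t
        rcases eq_or_ne i 0 with rfl | hi
        · simpa using this
        · simp [hi])
    have hc0 : ∀ᵐ ω ∂P, ∀ t, costF (a' t ω) (b' t ω) (y t ω) = 0 := by
      filter_upwards [h0, hz, ae_all_iff.2 fun t => hC' t _ (hy t)] with ω h1 h2 h3
      simp only [z, Finset.sum_sub_distrib, h1, ← Finset.sum_smul] at h2
      have h4 := congrFun h2 0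
      simp at h4
      intro t
      exact (Finset.sum_eq_zero_iff_of_nonpos fun t _ => h3 t).1 h4 t (Finset.mem_univ t)
    refine ⟨fun t => ⟨(hy t).1.neg, ?_⟩, hk.1.neg, ?_⟩
    · filter_upwards [hc0, hab t, hst t, (hy t).2] with ω h1 h2 h3 h4
      exact costF_neg h2 h3 _ (h1 t) h4
    · filter_upwards [h0] with ω h1 i
      have := hk' ω
      rw [h1] at this
      rw [← this]; simp
  let A : ℕ → Set (Ω → Fin (d + 1) → ℝ) := fun s => {g |
    ∃ (y : Fin (T + 1) → Ω → Fin (d + 1) → ℝ) (k : Ω → Fin (d + 1) → ℝ), (∀ t, y t ∈ C t) ∧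
    (∀ t : Fin (T + 1), t.val < s → y t = fun _ => 0) ∧ k ∈ K ∧
    g = fun ω => ∑ t, y t ω + k ω}
  let Fs : ℕ → MeasurableSpace Ω := fun s => if h : s < T + 1 then ℱ ⟨s, h⟩ else m
  have hclosed : ∀ j s, s + j = T + 1 → ClosedL0Cone (Fs s) m P (A s) := by
    intro j
    induction j with
    | zero =>
      intro s hs
      have h1 : Fs s = m := by simp [Fs]; intro h; omega
      have h2 : A s = K := by
        ext g
        constructor
        · rintro ⟨y, k, hy, hy0, hk, rfl⟩
          have : (fun ω => ∑ t, y t ω + k ω) = k := by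
            funext ω
            rw [Finset.sum_eq_zero fun t _ => by rw [hy0 t (by omega)], zero_add]
          rwa [this]
        · intro hg
          exact ⟨fun _ _ => 0, g, fun t => (hC t).zero, fun _ _ => rfl, hg, by simp⟩
      rw [h1, h2]; exact hK
    | succ j ih =>
      intro s hs
      have hlt : s < T + 1 := by omega
      have h1 : Fs s = ℱ ⟨s, hlt⟩ := dif_pos hlt
      have hle : ℱ ⟨s, hlt⟩ ≤ Fs (s + 1) := by
        by_cases h : s + 1 < T + 1
        · simp only [Fs, h, dif_pos]
          exact ℱ.mono (by simp)
        · simp only [Fs, h, dif_neg, not_false_iff]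
          exact ℱ.le _
      have hA1 := (ih (s + 1) (by omega)).mono hle
      have h2 : A s = {g | ∃ x ∈ C ⟨s, hlt⟩, ∃ h ∈ A (s + 1), g = fun ω => x ω + h ω} := by
        ext g
        constructor
        · rintro ⟨y, k, hy, hy0, hk, rfl⟩
          refine ⟨y ⟨s, hlt⟩, hy _, _, ⟨fun t => if t = ⟨s, hlt⟩ then fun _ => 0 else y t, k,
            ?_, ?_, hk, rfl⟩, ?_⟩
          · intro t
            by_cases h : t = ⟨s, hlt⟩
            · simp only [h, if_true]; exact (hC _).zero
            · simp only [h, if_false]; exact hy t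
          · intro t ht
            by_cases h : t = ⟨s, hlt⟩
            · simp [h]
            · simp only [h, if_false]
              refine hy0 t ?_
              have : t.val ≠ s := fun e => h (Fin.ext e)
              omega
          · funext ω
            have : ∀ t, y t ω = (if t = ⟨s, hlt⟩ then y ⟨s, hlt⟩ ω else 0) +
                (if t = ⟨s, hlt⟩ then fun _ => 0 else y t) ω := by
              intro t
              by_cases h : t = ⟨s, hlt⟩
              · subst h; simp
              · simp [h]
            rw [Finset.sum_congr rfl fun t _ => this t, Finset.sum_add_distrib]
            simp [add_assoc]
        · rintro ⟨x, hx, _, ⟨y, k, hy, hy0, hk, rfl⟩, rfl⟩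
          refine ⟨fun t => if t = ⟨s, hlt⟩ then x else y t, k, ?_, ?_, hk, ?_⟩
          · intro t
            by_cases h : t = ⟨s, hlt⟩
            · subst h; simpa using hx
            · simp only [h, if_false]; exact hy t
          · intro t ht
            have h : t ≠ ⟨s, hlt⟩ := by rintro rfl; simp at ht
            simp only [h, if_false]
            exact hy0 t (by omega)
          · funext ω
            have : ∀ t, (if t = ⟨s, hlt⟩ then x else y t) ω =
                (if t = ⟨s, hlt⟩ then x ω else 0) + y t ω := by
              intro t
              by_cases h : t = ⟨s, hlt⟩
              · subst h; simp [hy0 ⟨s, hlt⟩ (by simp)]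
              · simp [h]
            rw [Finset.sum_congr rfl fun t _ => this t, Finset.sum_add_distrib]
            simp [add_assoc]
      rw [h1, h2]
      refine ClosedL0Cone.add_closed (ℱ.le _) (hC _) hA1 ?_
      rintro x hx ⟨y, k, hy, hy0, hk, e⟩
      have hys : y ⟨s, hlt⟩ = fun _ => 0 := hy0 _ (by simp)
      have hsum : ∀ ω, ∑ t, (if t = ⟨s, hlt⟩ then x else y t) ω = x ω + ∑ t, y t ω := by
        intro ω
        have : ∀ t, (if t = ⟨s, hlt⟩ then x else y t) ω =
            (if t = ⟨s, hlt⟩ then x ω else 0) + y t ω := by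
          intro t
          by_cases h : t = ⟨s, hlt⟩
          · subst h; simp [hys]
          · simp [h]
        rw [Finset.sum_congr rfl fun t _ => this t, Finset.sum_add_distrib]
        simp
      obtain ⟨g1, g2⟩ := hnull (fun t => if t = ⟨s, hlt⟩ then x else y t) k (by
        intro t
        by_cases h : t = ⟨s, hlt⟩
        · subst h; simpa using hx
        · simp only [h, if_false]; exact hy t) hk (by
        intro ω
        have e' := congrFun e ω
        rw [hsum, add_assoc, ← e']; simp)
      refine ⟨by simpa using g1 ⟨s, hlt⟩, fun t ω => - y t ω, fun ω => - k ω, ?_, ?_, g2, ?_⟩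
      · intro t
        by_cases h : t = ⟨s, hlt⟩
        · subst h; simp only [hys, neg_zero]; exact (hC _).zero
        · simpa [h] using g1 t
      · intro t ht
        funext ω
        simp [hy0 t ht]
      · funext ω
        have e' := congrFun e ω
        rw [Finset.sum_neg_distrib, ← neg_add, ← e', neg_neg]
  have hF0 : Fs 0 = ℱ 0 := by simp [Fs]
  refine ⟨A 0, hF0 ▸ hclosed (T + 1) 0 (by simp), ?_, ?_, ?_⟩
  · intro t x hx hx'
    refine ⟨fun s => if s = t then x else fun _ => 0, fun _ => 0, ?_, by simp, hK.zero, ?_⟩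
    · intro s
      by_cases h : s = t
      · subst h; simpa using ⟨hx, hx'⟩
      · simp only [h, if_false]; exact (hC s).zero
    · funext ω
      rw [Finset.sum_eq_single t]
      · simp
      · intro s _ hs; simp [hs]
      · simp
  · intro x hx hx'
    exact ⟨fun _ _ => 0, x, fun t => (hC t).zero, by simp, ⟨hx, hx'⟩, by simp⟩
  · rintro _ ⟨y, k, hy, -, hk, rfl⟩ hpos
    have h0 := hzero y hy (by
      filter_upwards [hpos, hk.2] with ω h1 h2 i
      have := h1 i
      have := h2 i
      simp only [Pi.add_apply] at *
      linarith)
    filter_upwards [hpos, hk.2, h0] with ω h1 h2 h3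
    rw [h3, zero_add] at h1 ⊢
    funext i
    exact le_antisymm (h2 i) (h1 i)

open Filter Topology in
/-- Kreps--Yan type theorem in `L²`. -/
lemma kreps_yan {Ω : Type*} {d : ℕ} {G m : MeasurableSpace Ω} (P : Measure Ω)
    [IsProbabilityMeasure P] (A : Set (Ω → Fin (d + 1) → ℝ)) (hA : ClosedL0Cone G m P A)
    (hneg : ∀ x : Ω → Fin (d + 1) → ℝ, Measurable x → (∀ᵐ ω ∂P, ∀ i, x ω i ≤ 0) → x ∈ A)
    (hNA : ∀ x ∈ A, (∀ᵐ ω ∂P, ∀ i, 0 ≤ x ω i) → ∀ᵐ ω ∂P, x ω = 0) :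
    ∃ Z : Ω → Fin (d + 1) → ℝ, (∀ i, Integrable (fun ω => Z ω i) P) ∧ (∀ᵐ ω ∂P, 0 < Z ω 0) ∧
      ∀ x ∈ A, (∃ M : ℝ, ∀ ω i, |x ω i| ≤ M) → ∫ ω, ∑ i, x ω i * Z ω i ∂P ≤ 0 := by
  classical
  let H := Lp (EuclideanSpace ℝ (Fin (d + 1))) 2 P
  let fn : H → Ω → Fin (d + 1) → ℝ := fun f ω i => - (f ω) i
  have hfm : ∀ f : H, Measurable (fn f) := by
    intro f
    refine measurable_pi_lambda _ fun i => ?_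
    have h1 : Measurable f := (Lp.stronglyMeasurable f).measurable
    have h2 : Measurable fun v : EuclideanSpace ℝ (Fin (d + 1)) => v i :=
      (EuclideanSpace.proj (𝕜 := ℝ) i).continuous.measurable
    exact (h2.comp h1).neg
  let 𝒞 : ProperCone ℝ H :=
    { carrier := {f | fn f ∈ A}
      zero_mem' := by
        refine hA.congr hA.zero (hfm 0) ?_
        filter_upwards [Lp.coeFn_zero (EuclideanSpace ℝ (Fin (d + 1))) 2 P] with ω hω
        funext i
        simp [fn]
      add_mem' := by
        intro f g hf hg
        refine hA.congr (hA.add _ hf _ hg) (hfm _) ?_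
        filter_upwards [Lp.coeFn_add f g] with ω hω
        funext i
        symm
        change - (((f + g : Lp (EuclideanSpace ℝ (Fin (d + 1))) 2 P) : Ω → _) ω) i = _
        rw [hω]
        change - ((f ω) i + (g ω) i) = - (f ω) i + - (g ω) i
        ring
      smul_mem' := by
        intro c f hf
        refine hA.congr (hA.smul (fun _ => c.1) measurable_const (fun _ => c.2) _ hf) (hfm _) ?_
        filter_upwards [Lp.coeFn_smul c.1 f] with ω hω
        funext i
        symm
        change - (((c.1 • f : Lp (EuclideanSpace ℝ (Fin (d + 1))) 2 P) : Ω → _) ω) i = _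
        rw [hω]
        change - (c.1 * (f ω) i) = c.1 * - (f ω) i
        ring
      isClosed' := by
        refine IsSeqClosed.isClosed ?_
        intro f g hf hfg
        obtain ⟨ns, -, hns⟩ := (tendstoInMeasure_of_tendsto_Lp hfg).exists_seq_tendsto_ae
        refine hA.lim (fun n => fn (f (ns n))) _ (fun n => hf (ns n)) (hfm _) ?_
        filter_upwards [hns] with ω hω
        refine tendsto_pi_nhds.2 fun i => ?_
        exact (((EuclideanSpace.proj (𝕜 := ℝ) i).continuous.tendsto _).comp hω).neg }
  have h𝒞 : ∀ f : H, f ∈ 𝒞 ↔ fn f ∈ A := fun f => Iff.rfl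
  let D : H → Prop := fun Z => ∀ f ∈ 𝒞, 0 ≤ inner ℝ f Z
  let e : EuclideanSpace ℝ (Fin (d + 1)) := EuclideanSpace.single 0 1
  let ind : ∀ s : Set Ω, MeasurableSet s → H := fun s hs =>
    indicatorConstLp 2 hs (measure_ne_top P s) e
  have hind : ∀ s hs (Z : H), inner ℝ (ind s hs) Z = ∫ ω in s, (Z ω) 0 ∂P := by
    intro s hs Z
    simp only [ind]
    rw [L2.inner_indicatorConstLp_eq_setIntegral_inner]
    simp [e, EuclideanSpace.inner_single_left]
  have hcoord : ∀ (Z : H) i, Integrable (fun ω => (Z ω) i) P := by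
    intro Z i
    have h1 : Integrable Z P := (Lp.memLp Z).integrable (by norm_num)
    exact (EuclideanSpace.proj (𝕜 := ℝ) i).integrable_comp h1
  have hindC : ∀ s hs, ind s hs ∈ 𝒞 := by
    intro s hs
    rw [h𝒞]
    refine hneg _ (hfm _) ?_
    filter_upwards [indicatorConstLp_coeFn (p := 2) (hs := hs) (hμs := measure_ne_top P s) (c := e)]
      with ω hω i
    simp only [fn, ind, hω, Left.neg_nonpos_iff]
    by_cases h : ω ∈ s
    · simp only [h, indicator_of_mem, e]
      simp [PiLp.single_apply]
      split_ifs <;> norm_num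
    · simp [h]
  have hDnn : ∀ Z, D Z → ∀ᵐ ω ∂P, 0 ≤ (Z ω) 0 := by
    intro Z hZ
    refine ae_nonneg_of_forall_setIntegral_nonneg (hcoord Z 0) fun s hs _ => ?_
    rw [← hind s hs]
    exact hZ _ (hindC s hs)
  have hZm : ∀ Z : H, Measurable fun ω => (Z ω) 0 := by
    intro Z
    exact (EuclideanSpace.proj (𝕜 := ℝ) 0).continuous.measurable.comp (Lp.stronglyMeasurable Z).measurable
  let p : H → ℝ := fun Z => P.real {ω | 0 < (Z ω) 0}
  have hset : ∀ Z : H, MeasurableSet {ω | 0 < (Z ω) 0} := fun Z =>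
    measurableSet_lt measurable_const (hZm Z)
  have hD0 : D 0 := fun f _ => by
    change 0 ≤ inner ℝ f 0
    rw [inner_zero_right]
  obtain ⟨u, -, hu, huS⟩ := exists_seq_tendsto_sSup (S := p '' {Z | D Z}) ⟨_, 0, hD0, rfl⟩
    ⟨1, by rintro _ ⟨Z, -, rfl⟩; exact measureReal_le_one⟩
  have hbdd : BddAbove (p '' {Z | D Z}) := ⟨1, by rintro _ ⟨Z, -, rfl⟩; exact measureReal_le_one⟩
  choose Z hZD hZu using huS
  let c : ℕ → ℝ := fun n => (1 / 2) ^ n * (1 + ‖Z n‖)⁻¹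
  have hc0 : ∀ n, 0 < c n := fun n => by positivity
  have hsum : Summable fun n => c n • Z n := by
    refine Summable.of_norm_bounded (g := fun n => (1 / 2 : ℝ) ^ n) (summable_geometric_of_lt_one (by norm_num) (by norm_num)) fun n => ?_
    rw [norm_smul, Real.norm_eq_abs, abs_of_pos (hc0 n)]
    simp only [c, mul_assoc]
    refine mul_le_of_le_one_right (by positivity) ?_
    rw [inv_mul_le_one₀ (by positivity)]
    linarith
  obtain ⟨W, hW⟩ := hsum
  have hWle : ∀ f ∈ 𝒞, ∀ n, c n * inner ℝ f (Z n) ≤ inner ℝ f W := by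
    intro f hf n
    have h1 := (innerSL ℝ f).hasSum hW
    have h2 := le_hasSum h1 n (fun j _ => by
      simp only [innerSL_apply_apply, inner_smul_right]
      exact mul_nonneg (hc0 j).le (hZD j f hf))
    simpa [inner_smul_right] using h2
  have hWD : D W := fun f hf =>
    (mul_nonneg (hc0 0).le (hZD 0 f hf)).trans (hWle f hf 0)
  have hpos_of : ∀ (s : Set Ω), MeasurableSet s → ∀ Y : H, D Y → ∫ ω in s, (Y ω) 0 ∂P ≤ 0 →
      ∀ᵐ ω ∂P, ω ∈ s → (Y ω) 0 = 0 := by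
    intro s hs Y hY hle
    have h1 : 0 ≤ᵐ[P.restrict s] fun ω => (Y ω) 0 := ae_restrict_of_ae (hDnn Y hY)
    have h2 : ∫ ω in s, (Y ω) 0 ∂P = 0 := le_antisymm hle (integral_nonneg_of_ae h1)
    have h3 := (integral_eq_zero_iff_of_nonneg_ae h1 (hcoord Y 0).integrableOn).1 h2
    exact (ae_restrict_iff' hs).1 h3
  have hWp : ∀ n, u n ≤ p W := by
    intro n
    rw [← hZu n]
    refine ENNReal.toReal_mono (measure_ne_top _ _) (measure_mono_ae ?_)
    have hs : MeasurableSet {ω | (W ω) 0 ≤ 0} := measurableSet_le (hZm W) measurable_const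
    have h1 := hWle _ (hindC _ hs) n
    rw [hind, hind] at h1
    have h2 : ∫ ω in {ω | (W ω) 0 ≤ 0}, (W ω) 0 ∂P ≤ 0 :=
      setIntegral_nonpos hs fun ω hω => hω
    have h3 := hpos_of _ hs (Z n) (hZD n) (by
      by_contra hlt
      have := mul_pos (hc0 n) (not_le.1 hlt)
      linarith)
    filter_upwards [h3] with ω hω hpos
    by_contra hn
    have := hω (not_lt.1 hn)
    have hpos' : 0 < ((Z n) ω) 0 := hpos
    linarith
  have hWsup : sSup (p '' {Z | D Z}) ≤ p W := le_of_tendsto' hu hWp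
  have hWpos : ∀ᵐ ω ∂P, 0 < (W ω) 0 := by
    by_contra hcon
    have hs : MeasurableSet {ω | ¬ 0 < (W ω) 0} := (hset W).compl
    have hPs : P {ω | ¬ 0 < (W ω) 0} ≠ 0 := hcon
    have hnot : - ind _ hs ∉ 𝒞 := by
      intro hmem
      rw [h𝒞] at hmem
      have hfe : ∀ᵐ ω ∂P, fn (- ind _ hs) ω = indicator {ω | ¬ 0 < (W ω) 0} (fun _ => Pi.single 0 1) ω := by
        filter_upwards [Lp.coeFn_neg (ind _ hs), indicatorConstLp_coeFn (p := 2) (hs := hs)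
          (hμs := measure_ne_top P _) (c := e)] with ω h1 h2
        funext i
        simp only [fn, h1, Pi.neg_apply, PiLp.neg_apply, neg_neg]
        simp only [ind]
        rw [h2]
        by_cases h : ω ∈ {ω | ¬ 0 < (W ω) 0}
        · simp only [h, indicator_of_mem]
          simp [e, Pi.single_apply]
        · simp only [h, indicator_of_notMem, not_false_iff]; simp
      have h0 := hNA _ hmem (by
        filter_upwards [hfe] with ω h1 i
        rw [h1]
        refine indicator_apply_nonneg (M := Fin (d + 1) → ℝ) (fun _ => ?_) i
        exact Pi.single_nonneg.2 zero_le_one)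
      apply hPs
      rw [measure_eq_zero_iff_ae_notMem]
      filter_upwards [hfe, h0] with ω h1 h2 hω
      rw [h1, indicator_of_mem hω] at h2
      have := congrFun h2 0
      simp at this
    obtain ⟨y, hy1, hy2⟩ := ProperCone.hyperplane_separation' 𝒞 hnot
    have hyD : D y := hy1
    rw [inner_neg_left, hind] at hy2
    have hWy : D (W + y) := fun f hf => by
      rw [inner_add_right]; exact add_nonneg (hWD f hf) (hyD f hf)
    have hle : p (W + y) ≤ p W := (le_csSup hbdd ⟨_, hWy, rfl⟩).trans hWsup
    have hdis : Disjoint {ω | 0 < (W ω) 0} ({ω | ¬ 0 < (W ω) 0} ∩ {ω | 0 < (y ω) 0}) := by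
      rw [Set.disjoint_left]
      rintro ω h1 ⟨h2, -⟩
      exact h2 h1
    have hms : MeasurableSet ({ω | ¬ 0 < (W ω) 0} ∩ {ω | 0 < (y ω) 0}) := hs.inter (hset y)
    have h5 : P.real ({ω | 0 < (W ω) 0} ∪ ({ω | ¬ 0 < (W ω) 0} ∩ {ω | 0 < (y ω) 0})) ≤ p (W + y) := by
      refine ENNReal.toReal_mono (measure_ne_top _ _) (measure_mono_ae ?_)
      filter_upwards [Lp.coeFn_add W y, hDnn W hWD, hDnn y hyD] with ω h1 h2 h3 h4
      have e1 : ((W + y : H) ω) 0 = (W ω) 0 + (y ω) 0 := by rw [h1]; rfl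
      change 0 < ((W + y : H) ω) 0
      rw [e1]
      rcases h4 with h4 | h4
      · have : 0 < (W ω) 0 := h4
        linarith
      · have : 0 < (y ω) 0 := h4.2
        linarith
    rw [measureReal_union hdis hms] at h5
    have h6 : P.real ({ω | ¬ 0 < (W ω) 0} ∩ {ω | 0 < (y ω) 0}) = 0 :=
      le_antisymm (by simp only [p] at hle h5; linarith) measureReal_nonneg
    have h7 : P ({ω | ¬ 0 < (W ω) 0} ∩ {ω | 0 < (y ω) 0}) = 0 := by
      rwa [measureReal_eq_zero_iff] at h6
    have h8 : ∫ ω in {ω | ¬ 0 < (W ω) 0}, (y ω) 0 ∂P ≤ 0 := by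
      refine integral_nonpos_of_ae ?_
      refine (ae_restrict_iff' hs).2 ?_
      rw [measure_eq_zero_iff_ae_notMem] at h7
      filter_upwards [h7] with ω h9 h10
      by_contra h11
      exact h9 ⟨h10, not_le.1 h11⟩
    linarith
  refine ⟨fun ω i => (W ω) i, fun i => hcoord W i, hWpos, ?_⟩
  rintro x hx ⟨M, hM⟩
  have hxm : Measurable x := hA.meas x hx
  let f₀ : Ω → EuclideanSpace ℝ (Fin (d + 1)) := fun ω => WithLp.toLp 2 (fun i => - x ω i)
  have hf₀m : Measurable f₀ := by
    have : Measurable fun ω i => - x ω i := hxm.neg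
    exact (PiLp.continuous_toLp 2 _).measurable.comp this
  have hf₀ : MemLp f₀ 2 P := by
    refine MemLp.of_bound hf₀m.aestronglyMeasurable (Real.sqrt (∑ i : Fin (d + 1), M ^ 2)) (ae_of_all _ fun ω => ?_)
    rw [EuclideanSpace.norm_eq]
    refine Real.sqrt_le_sqrt (Finset.sum_le_sum fun i _ => ?_)
    simp only [f₀, norm_neg, Real.norm_eq_abs]
    exact pow_le_pow_left₀ (abs_nonneg _) (hM ω i) 2
  have hmem : hf₀.toLp f₀ ∈ 𝒞 := by
    rw [h𝒞]
    refine hA.congr hx (hfm _) ?_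
    filter_upwards [hf₀.coeFn_toLp] with ω hω
    funext i
    simp [fn, hω, f₀]
  have h1 := hWD _ hmem
  rw [L2.inner_def] at h1
  have h2 : ∫ ω, inner ℝ ((hf₀.toLp f₀) ω) (W ω) ∂P = - ∫ ω, ∑ i, x ω i * (W ω) i ∂P := by
    rw [← integral_neg]
    refine integral_congr_ae ?_
    filter_upwards [hf₀.coeFn_toLp] with ω hω
    rw [hω, PiLp.inner_apply]
    simp [f₀, mul_comm]
  linarith

/-- If a nonnegative-on-`D`, strictly positive function has nonpositive integral, `D` is null. -/
lemma null_of_setIntegral_nonpos {Ω : Type*} {m : MeasurableSpace Ω} (P : Measure Ω)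
    (D : Set Ω) (hD : MeasurableSet D) (f : Ω → ℝ) (hf : IntegrableOn f D P)
    (hpos : ∀ᵐ ω ∂P, ω ∈ D → 0 < f ω) (hint : ∫ ω in D, f ω ∂P ≤ 0) : P D = 0 := by
  have h1 : 0 ≤ᵐ[P.restrict D] f := by
    refine (ae_restrict_iff' hD).2 ?_
    filter_upwards [hpos] with ω h hω using (h hω).le
  have h2 : ∫ ω in D, f ω ∂P = 0 := le_antisymm hint (integral_nonneg_of_ae h1)
  have h3 := (ae_restrict_iff' hD).1 ((integral_eq_zero_iff_of_nonneg_ae h1 hf).1 h2)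
  rw [measure_eq_zero_iff_ae_notMem]
  filter_upwards [hpos, h3] with ω h4 h5 hω
  exact (h4 hω).ne' (h5 hω)

lemma condExp_le_mul {Ω : Type*} {G m : MeasurableSpace Ω} (hG : G ≤ m) (P : Measure Ω)
    [IsProbabilityMeasure P] (α U V : Ω → ℝ) (hα : Measurable[G] α)
    (hU : Integrable U P) (hV : Integrable V P)
    (h : ∀ (D : Set Ω) (n : ℕ), MeasurableSet[G] D → (∀ ω ∈ D, |α ω| ≤ n) →
      ∫ ω in D, (U ω - α ω * V ω) ∂P ≤ 0) :
    ∀ᵐ ω ∂P, P[U | G] ω ≤ α ω * P[V | G] ω := by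
  have key : ∀ n : ℕ, P ({ω | α ω * P[V | G] ω < P[U | G] ω} ∩ {ω | |α ω| ≤ n}) = 0 := by
    intro n
    set D := {ω | α ω * P[V | G] ω < P[U | G] ω} ∩ {ω | |α ω| ≤ n} with hDdef
    have hUm : Measurable[G] P[U | G] := stronglyMeasurable_condExp.measurable
    have hVm : Measurable[G] P[V | G] := stronglyMeasurable_condExp.measurable
    have hDG : MeasurableSet[G] D := by
      refine MeasurableSet.inter ?_ ?_
      · exact measurableSet_lt (hα.mul hVm) hUm
      · exact measurableSet_le (measurable_norm.comp hα) measurable_const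
    have hDm := hG _ hDG
    let β : Ω → ℝ := D.indicator α
    have hβ : StronglyMeasurable[G] β := (hα.indicator hDG).stronglyMeasurable
    have hβb : ∀ ω, ‖β ω‖ ≤ n := by
      intro ω
      by_cases hω : ω ∈ D
      · simp only [β, indicator_of_mem hω]; exact hω.2
      · simp [β, indicator_of_notMem hω]
    have hβV : Integrable (β * V) P :=
      hV.bdd_mul (hβ.mono hG).aestronglyMeasurable (ae_of_all _ hβb)
    have hβV' : Integrable (β * P[V | G]) P :=
      integrable_condExp.bdd_mul (hβ.mono hG).aestronglyMeasurable (ae_of_all _ hβb)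
    have e1 : ∫ ω in D, α ω * V ω ∂P = ∫ ω in D, (β * P[V | G]) ω ∂P := by
      have : ∫ ω in D, α ω * V ω ∂P = ∫ ω in D, (β * V) ω ∂P :=
        setIntegral_congr_fun hDm fun ω hω => by simp [β, indicator_of_mem hω]
      rw [this, ← setIntegral_condExp hG hβV hDG]
      exact integral_congr_ae (ae_restrict_of_ae
        (condExp_mul_of_stronglyMeasurable_left hβ hβV hV))
    have e2 : ∫ ω in D, U ω ∂P = ∫ ω in D, P[U | G] ω ∂P := (setIntegral_condExp hG hU hDG).symm
    have hαV : IntegrableOn (fun ω => α ω * V ω) D P :=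
      hβV.integrableOn.congr_fun (fun ω hω => by simp [β, indicator_of_mem hω]) hDm
    have h1 := h D n hDG (fun ω hω => hω.2)
    rw [integral_sub hU.integrableOn hαV, e1, e2,
      ← integral_sub integrable_condExp.integrableOn hβV'.integrableOn] at h1
    refine null_of_setIntegral_nonpos P D hDm _
      (integrable_condExp.integrableOn.sub hβV'.integrableOn) (ae_of_all _ fun ω hω => ?_) h1
    have h2 : α ω * P[V | G] ω < P[U | G] ω := hω.1
    have h3 : β ω = α ω := by simp only [β, indicator_of_mem hω]
    change 0 < P[U | G] ω - β ω * P[V | G] ω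
    rw [h3]
    linarith
  have := ae_all_iff.2 fun n => measure_eq_zero_iff_ae_notMem.1 (key n)
  filter_upwards [this] with ω hω
  by_contra hlt
  obtain ⟨n, hn⟩ := exists_nat_ge |α ω|
  exact hω n ⟨not_le.1 hlt, hn⟩

lemma condExp_pos_ae {Ω : Type*} {G m : MeasurableSpace Ω} (hG : G ≤ m) (P : Measure Ω)
    [IsProbabilityMeasure P] (V : Ω → ℝ) (hV : Integrable V P) (hpos : ∀ᵐ ω ∂P, 0 < V ω) :
    ∀ᵐ ω ∂P, 0 < P[V | G] ω := by
  have hVm : Measurable[G] P[V | G] := stronglyMeasurable_condExp.measurable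
  have hD : MeasurableSet[G] {ω | P[V | G] ω ≤ 0} :=
    measurableSet_le hVm measurable_const
  have h0 : P {ω | P[V | G] ω ≤ 0} = 0 := by
    refine null_of_setIntegral_nonpos P _ (hG _ hD) V hV.integrableOn ?_ ?_
    · filter_upwards [hpos] with ω h _ using h
    · rw [← setIntegral_condExp hG hV hD]
      exact setIntegral_nonpos (hG _ hD) fun ω hω => hω
  filter_upwards [measure_eq_zero_iff_ae_notMem.1 h0] with ω hω
  exact not_le.1 hω

lemma withDensity_trim_eq {Ω : Type*} {G m : MeasurableSpace Ω} (hG : G ≤ m) (P : Measure Ω)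
    [IsProbabilityMeasure P] (V : Ω → ℝ) (hV : Integrable V P) (hpos : ∀ᵐ ω ∂P, 0 < V ω) :
    (P.withDensity fun ω => ENNReal.ofReal (V ω)).trim hG =
      (P.withDensity fun ω => ENNReal.ofReal (P[V | G] ω)).trim hG := by
  refine @Measure.ext _ G _ _ fun B hB => ?_
  rw [trim_measurableSet_eq hG hB, trim_measurableSet_eq hG hB, withDensity_apply _ (hG _ hB),
    withDensity_apply _ (hG _ hB), ← ofReal_integral_eq_lintegral_ofReal hV.integrableOn,
    ← ofReal_integral_eq_lintegral_ofReal integrable_condExp.integrableOn,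
    setIntegral_condExp hG hV hB]
  · refine ae_restrict_of_ae ?_
    filter_upwards [condExp_pos_ae hG P V hV hpos] with ω h using h.le
  · refine ae_restrict_of_ae ?_
    filter_upwards [hpos] with ω h using h.le

/-- Bayes' rule for integrals. -/
lemma bayes_integral {Ω : Type*} {G m : MeasurableSpace Ω} (hG : G ≤ m) (P : Measure Ω)
    [IsProbabilityMeasure P] (V Y : Ω → ℝ) (hV : Integrable V P) (hpos : ∀ᵐ ω ∂P, 0 < V ω)
    (hY : StronglyMeasurable[G] Y) (hYV : Integrable (fun ω => P[V | G] ω * Y ω) P) :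
    Integrable Y (P.withDensity fun ω => ENNReal.ofReal (V ω)) ∧
    ∀ B, MeasurableSet[G] B → ∫ ω in B, Y ω ∂(P.withDensity fun ω => ENNReal.ofReal (V ω)) =
      ∫ ω in B, P[V | G] ω * Y ω ∂P := by
  have htr := withDensity_trim_eq hG P V hV hpos
  have hVpos := condExp_pos_ae hG P V hV hpos
  have hcm : Measurable fun ω => ENNReal.ofReal (P[V | G] ω) :=
    ((stronglyMeasurable_condExp (μ := P) (f := V) (m := G)).mono hG).measurable.ennreal_ofReal
  have hi1 : Integrable Y (P.withDensity fun ω => ENNReal.ofReal (P[V | G] ω)) := by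
    rw [integrable_withDensity_iff_integrable_smul' hcm (ae_of_all _ fun ω => ENNReal.ofReal_lt_top)]
    refine hYV.congr ?_
    filter_upwards [hVpos] with ω h
    rw [ENNReal.toReal_ofReal h.le, smul_eq_mul]
  refine ⟨integrable_of_integrable_trim hG ?_, fun B hB => ?_⟩
  · rw [htr]
    exact hi1.trim hG hY
  · rw [integral_trim (μ := (P.withDensity _).restrict B) hG hY, ← restrict_trim hG _ hB, htr, restrict_trim hG _ hB,
      ← integral_trim hG hY, setIntegral_withDensity_eq_setIntegral_toReal_smul hcm
      (ae_of_all _ fun ω => ENNReal.ofReal_lt_top) _ (hG _ hB)]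
    refine integral_congr_ae (ae_restrict_of_ae ?_)
    filter_upwards [hVpos] with ω h
    rw [ENNReal.toReal_ofReal h.le, smul_eq_mul]

lemma exists_martingale_of_density {Ω : Type*} {d T : ℕ} {m : MeasurableSpace Ω} (P : Measure Ω)
    [IsProbabilityMeasure P] (ℱ : Filtration (Fin (T + 1)) m)
    (a b : Fin (T + 1) → Ω → Fin d → ℝ)
    (ham : ∀ t i, Measurable[ℱ t] fun ω => a t ω i)
    (hbm : ∀ t i, Measurable[ℱ t] fun ω => b t ω i)
    (hba : ∀ t, ∀ᵐ ω ∂P, ∀ i, b t ω i ≤ a t ω i)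
    (Z : Ω → Fin (d + 1) → ℝ) (hZ : ∀ i, Integrable (fun ω => Z ω i) P)
    (hZ0 : ∀ᵐ ω ∂P, 0 < Z ω 0)
    (hZA : ∀ t x, Measurable[ℱ t] x → (∀ᵐ ω ∂P, costF (a t ω) (b t ω) (x ω) ≤ 0) →
      (∃ M : ℝ, ∀ ω i, |x ω i| ≤ M) → ∫ ω, ∑ i, x ω i * Z ω i ∂P ≤ 0)
    (hZ1 : ∫ ω, Z ω 0 ∂P = 1) :
    ∃ Q : Measure Ω, IsProbabilityMeasure Q ∧ Q ≪ P ∧ P ≪ Q ∧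
      ∃ S : Fin (T + 1) → Ω → Fin d → ℝ, Martingale S ℱ Q ∧
        ∀ t, ∀ i : Fin d, ∀ᵐ ω ∂P, b t ω i ≤ S t ω i ∧ S t ω i ≤ a t ω i := by
  classical
  let W : Fin (T + 1) → Fin (d + 1) → Ω → ℝ := fun t i => P[fun ω => Z ω i | ℱ t]
  have hW0 : ∀ t, ∀ᵐ ω ∂P, 0 < W t 0 ω := fun t => condExp_pos_ae (ℱ.le t) P _ (hZ 0) hZ0
  have hWm : ∀ t i, StronglyMeasurable[ℱ t] (W t i) := fun t i => stronglyMeasurable_condExp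
  have hgen : ∀ t (i : Fin d) (s : ℝ) (α : Ω → ℝ), |s| ≤ 1 → Measurable[ℱ t] α →
      (∀ᵐ ω ∂P, -α ω + max (a t ω i * s) (b t ω i * s) ≤ 0) →
      ∀ᵐ ω ∂P, s * W t i.succ ω ≤ α ω * W t 0 ω := by
    intro t i s α hs hα hc
    have h1 := condExp_le_mul (ℱ.le t) P α (s • fun ω => Z ω i.succ) (fun ω => Z ω 0) hα
      ((hZ i.succ).smul s) (hZ 0) (by
        intro D n hD hDn
        let x : Ω → Fin (d + 1) → ℝ := D.indicator fun ω => Fin.cons (-α ω) (Pi.single i s)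
        have hx0 : ∀ ω ∈ D, x ω = Fin.cons (-α ω) (Pi.single i s) := fun ω hω => by
          simp [x, indicator_of_mem hω]
        have hx1 : ∀ ω, ω ∉ D → x ω = 0 := fun ω hω => by
          simp [x, indicator_of_notMem hω]
        have hxm : Measurable[ℱ t] x := by
          refine Measurable.indicator ?_ hD
          refine @measurable_pi_lambda _ _ _ (ℱ t) _ _ fun j => ?_
          refine Fin.cases ?_ (fun j => ?_) j
          · simp only [Fin.cons_zero]; exact hα.neg
          · simp only [Fin.cons_succ]; exact measurable_const
        have h2 := hZA t x hxm (by
          filter_upwards [hc] with ω hω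
          by_cases hωD : ω ∈ D
          · rw [hx0 ω hωD]
            unfold costF
            rw [Finset.sum_eq_single i]
            · simpa using hω
            · intro j _ hj
              simp [hj]
            · simp
          · rw [hx1 ω hωD]; simp [costF]) ⟨max n 1, fun ω j => by
            by_cases hωD : ω ∈ D
            · rw [hx0 ω hωD]
              refine Fin.cases ?_ (fun j => ?_) j
              · simp only [Fin.cons_zero, abs_neg]; exact (hDn ω hωD).trans (le_max_left _ _)
              · simp only [Fin.cons_succ, Pi.single_apply]
                split_ifs
                · exact hs.trans (le_max_right _ _)
                · simp
            · rw [hx1 ω hωD]; simp⟩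
        refine le_of_eq_of_le ?_ h2
        rw [← integral_indicator (ℱ.le t _ hD)]
        refine integral_congr_ae (ae_of_all _ fun ω => ?_)
        by_cases hωD : ω ∈ D
        · simp only [indicator_of_mem hωD, hx0 ω hωD]
          rw [Fin.sum_univ_succ, Finset.sum_eq_single i]
          · simp; ring
          · intro j _ hj
            simp [hj]
          · simp
        · simp [indicator_of_notMem hωD, hx1 ω hωD])
    filter_upwards [h1, condExp_smul (μ := P) s (fun ω => Z ω i.succ) (ℱ t)] with ω h3 h4
    rw [h4] at h3
    simpa using h3
  have hup : ∀ t i, ∀ᵐ ω ∂P, W t i.succ ω ≤ a t ω i * W t 0 ω := by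
    intro t i
    have := hgen t i 1 (fun ω => a t ω i) (by simp) (ham t i) (by
      filter_upwards [hba t] with ω h
      simp [h i])
    simpa using this
  have hlo : ∀ t i, ∀ᵐ ω ∂P, b t ω i * W t 0 ω ≤ W t i.succ ω := by
    intro t i
    have := hgen t i (-1) (fun ω => - b t ω i) (by simp) (hbm t i).neg (by
      filter_upwards [hba t] with ω h
      simp [h i])
    filter_upwards [this] with ω h
    linarith
  let Q := P.withDensity fun ω => ENNReal.ofReal (Z ω 0)
  have hQ : IsProbabilityMeasure Q := ⟨by
    simp only [Q]
    rw [withDensity_apply _ MeasurableSet.univ, Measure.restrict_univ,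
      ← ofReal_integral_eq_lintegral_ofReal (hZ 0) (by filter_upwards [hZ0] with ω h using h.le), hZ1]
    simp⟩
  let S : Fin (T + 1) → Ω → Fin d → ℝ := fun t ω i => W t i.succ ω / W t 0 ω
  have hSm : ∀ t i, StronglyMeasurable[ℱ t] fun ω => S t ω i := fun t i =>
    ((hWm t i.succ).measurable.div (hWm t 0).measurable).stronglyMeasurable
  have hWS : ∀ t i, (fun ω => W t 0 ω * S t ω i) =ᵐ[P] W t i.succ := by
    intro t i
    filter_upwards [hW0 t] with ω h
    simp only [S]; field_simp
  have hB : ∀ t i, Integrable (fun ω => S t ω i) Q ∧ ∀ B, MeasurableSet[ℱ t] B →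
      ∫ ω in B, S t ω i ∂Q = ∫ ω in B, Z ω i.succ ∂P := by
    intro t i
    obtain ⟨h1, h2⟩ := bayes_integral (ℱ.le t) P (fun ω => Z ω 0) (fun ω => S t ω i) (hZ 0) hZ0
      (hSm t i) ((integrable_condExp (f := fun ω => Z ω i.succ)).congr (hWS t i).symm)
    refine ⟨h1, fun B hB => (h2 B hB).trans ?_⟩
    rw [← setIntegral_condExp (ℱ.le t) (hZ i.succ) hB]
    exact integral_congr_ae (ae_restrict_of_ae (hWS t i))
  have hSint : ∀ t, Integrable (S t) Q := fun t => Integrable.of_eval fun i => (hB t i).1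
  have hSsm : ∀ t, StronglyMeasurable[ℱ t] (S t) := fun t =>
    (@measurable_pi_lambda _ _ _ (ℱ t) _ _ fun i => (hSm t i).measurable).stronglyMeasurable
  refine ⟨Q, hQ, withDensity_absolutelyContinuous _ _, withDensity_absolutelyContinuous'
    (hZ 0).aemeasurable.ennreal_ofReal ?_, S, ⟨hSsm, fun s t hst => ?_⟩, fun t i => ?_⟩
  · filter_upwards [hZ0] with ω h
    simpa using h
  · refine (ae_eq_condExp_of_forall_setIntegral_eq (ℱ.le s) (hSint t)
      (fun B _ _ => (hSint s).integrableOn) (fun B hBm _ => ?_) (hSsm s).aestronglyMeasurable).symm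
    funext i
    rw [eval_integral (fun i => (hB s i).1.integrableOn), eval_integral (fun i => (hB t i).1.integrableOn),
      (hB s i).2 B hBm, (hB t i).2 B (ℱ.mono hst _ hBm)]
  · filter_upwards [hW0 t, hup t i, hlo t i] with ω h1 h2 h3
    exact ⟨(le_div_iff₀ h1).2 h3, (div_le_iff₀ h1).2 h2⟩

lemma mem_ri_Icc {b a x : ℝ} (hba : b ≤ a) :
    x ∈ intrinsicInterior ℝ (Icc b a) ↔ (b < x ∧ x < a) ∨ (b = a ∧ x = a) := by
  rcases hba.lt_or_eq with h | h
  · have hspan : affineSpan ℝ (Icc b a) = ⊤ := by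
      refine affineSpan_eq_top_of_nonempty_interior ?_
      rw [(convex_Icc b a).convexHull_eq, interior_Icc]
      exact nonempty_Ioo.2 h
    have hopen : IsOpen ((affineSpan ℝ (Icc b a) : AffineSubspace ℝ ℝ) : Set ℝ) := by
      rw [hspan]; exact isOpen_univ
    have hsub : intrinsicInterior ℝ (Icc b a) ⊆ interior (Icc b a) := by
      refine interior_maximal intrinsicInterior_subset ?_
      exact hopen.isOpenMap_subtype_val _ isOpen_interior
    have heq : intrinsicInterior ℝ (Icc b a) = Ioo b a := by
      rw [← interior_Icc]
      exact hsub.antisymm interior_subset_intrinsicInterior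
    rw [heq]
    simp [h.ne]
  · subst h
    rw [Icc_self, intrinsicInterior_singleton]
    simp only [mem_singleton_iff, true_and]
    constructor
    · exact Or.inr
    · rintro (⟨h1, h2⟩ | h)
      · exact absurd (h1.trans h2) (lt_irrefl _)
      · exact h

/-- The generated closed cone contains nonnegative combinations. -/
lemma generatedClosedCone_add {d : ℕ} {S : Set (Fin d → ℝ)} {x y : Fin d → ℝ}
    (hx : x ∈ generatedClosedCone S) (hy : y ∈ generatedClosedCone S) :
    x + y ∈ generatedClosedCone S := by
  rintro C ⟨h1, h2, h3, h4⟩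
  have hx' := hx C ⟨h1, h2, h3, h4⟩
  have hy' := hy C ⟨h1, h2, h3, h4⟩
  have h5 := h3 hx' hy' (a := 1 / 2) (b := 1 / 2) (by norm_num) (by norm_num) (by norm_num)
  have h6 := h4 _ h5 2 (by norm_num)
  have : (2 : ℝ) • ((1 / 2 : ℝ) • x + (1 / 2 : ℝ) • y) = x + y := by
    rw [smul_add, smul_smul, smul_smul]; norm_num
  rwa [this] at h6

lemma generatedClosedCone_smul {d : ℕ} {S : Set (Fin d → ℝ)} {x : Fin d → ℝ} {c : ℝ} (hc : 0 ≤ c)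
    (hx : x ∈ generatedClosedCone S) : c • x ∈ generatedClosedCone S := by
  rintro C ⟨h1, h2, h3, h4⟩
  exact h4 _ (hx C ⟨h1, h2, h3, h4⟩) c hc

lemma generatedClosedCone_sum {d : ℕ} {S : Set (Fin d → ℝ)} {ι : Type*} (s : Finset ι)
    (f : ι → Fin d → ℝ) (h0 : (0 : Fin d → ℝ) ∈ generatedClosedCone S)
    (hf : ∀ i ∈ s, f i ∈ generatedClosedCone S) : ∑ i ∈ s, f i ∈ generatedClosedCone S := by
  classical
  induction s using Finset.induction_on with
  | empty => simpa using h0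
  | insert j s hj ih =>
    rw [Finset.sum_insert hj]
    exact generatedClosedCone_add (hf j (Finset.mem_insert_self _ _))
      (ih fun i hi => hf i (Finset.mem_insert_of_mem hi))

lemma subset_generatedClosedCone {d : ℕ} {S : Set (Fin d → ℝ)} : S ⊆ generatedClosedCone S :=
  fun _ hx _ hC => hC.1 hx

lemma neg_mem_solvencyCone_of_cost {d : ℕ} (M : Matrix (Fin (d + 1)) (Fin (d + 1)) ℝ)
    (hM : IsBidAskMatrix M) (z : Fin (d + 1) → ℝ)
    (hz : costF (fun i => M 0 i.succ) (fun i => 1 / M i.succ 0) z ≤ 0) :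
    z ∈ -(solvencyCone M) := by
  rw [Set.mem_neg]
  have hba : ∀ i : Fin d, 1 / M i.succ 0 ≤ M 0 i.succ := by
    intro i
    rw [div_le_iff₀ (hM.1 _ _)]
    have := hM.2.2 0 0 i.succ
    rwa [hM.2.1] at this
  have hgen0 : ∀ i, (Pi.single i 1 : Fin (d + 1) → ℝ) ∈ solvencyCone M := fun i =>
    subset_generatedClosedCone (Or.inl ⟨i, rfl⟩)
  have hgen1 : ∀ i j, M i j • (Pi.single i 1 : Fin (d + 1) → ℝ) - Pi.single j 1 ∈ solvencyCone M :=
    fun i j => subset_generatedClosedCone (Or.inr ⟨i, j, rfl⟩)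
  have h0 : (0 : Fin (d + 1) → ℝ) ∈ solvencyCone M := by
    have := generatedClosedCone_smul le_rfl (hgen0 0)
    rw [zero_smul] at this
    exact this
  let g : Fin d → Fin (d + 1) → ℝ := fun i =>
    max (M 0 i.succ * z i.succ) (1 / M i.succ 0 * z i.succ) • Pi.single 0 1
      - z i.succ • Pi.single i.succ 1
  have hg : ∀ i, g i ∈ solvencyCone M := by
    intro i
    have hp := hM.1 i.succ 0
    rcases le_total 0 (z i.succ) with h | h
    · have h1 := generatedClosedCone_smul h (hgen1 0 i.succ)
      have h2 : g i = z i.succ • (M 0 i.succ • (Pi.single 0 1 : Fin (d + 1) → ℝ) - Pi.single i.succ 1) := by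
        simp only [g]
        rw [max_eq_left (mul_le_mul_of_nonneg_right (hba i) h), smul_sub, smul_smul, mul_comm]
      rw [h2]; exact h1
    · have h1 := generatedClosedCone_smul (c := - z i.succ / M i.succ 0)
        (div_nonneg (by linarith) hp.le) (hgen1 i.succ 0)
      have h2 : g i = (- z i.succ / M i.succ 0) •
          (M i.succ 0 • (Pi.single i.succ 1 : Fin (d + 1) → ℝ) - Pi.single 0 1) := by
        simp only [g]
        rw [max_eq_right (mul_le_mul_of_nonpos_right (hba i) h), smul_sub, smul_smul,
          div_mul_cancel₀ _ hp.ne', neg_smul, neg_div, neg_smul, sub_neg_eq_add, one_div_mul_eq_div]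
        abel
      rw [h2]; exact h1
  have hk := generatedClosedCone_smul (neg_nonneg.2 hz) (hgen0 0)
  have hsum := generatedClosedCone_add hk (generatedClosedCone_sum Finset.univ g h0 fun i _ => hg i)
  have hfin : -z = (-costF (fun i => M 0 i.succ) (fun i => 1 / M i.succ 0) z) •
      (Pi.single 0 1 : Fin (d + 1) → ℝ) + ∑ i, g i := ?_
  · rw [hfin]; exact hsum
  funext j
  simp only [g, costF, Pi.add_apply, Pi.neg_apply, Finset.sum_apply, Pi.sub_apply, Pi.smul_apply,
    smul_eq_mul, Finset.sum_sub_distrib, ← Finset.sum_mul]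
  refine Fin.cases ?_ (fun j => ?_) j
  · simp
  · have hs : ∑ i : Fin d, z i.succ * (Pi.single i.succ 1 : Fin (d + 1) → ℝ) j.succ = z j.succ := by
      rw [Finset.sum_eq_single j]
      · simp
      · intro i _ hi
        simp [Pi.single_apply, Fin.succ_inj, hi.symm]
      · simp
    rw [hs]
    simp

lemma forward_direction
    {Ω : Type*} {d T : ℕ}
    {m : MeasurableSpace Ω} (P : Measure Ω) [IsProbabilityMeasure P]
    (ℱ : Filtration (Fin (T + 1)) m)
    (Sb Sa : Fin (T + 1) → Ω → Fin (d + 1) → ℝ)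
    (hSbmeas : ∀ t i, Measurable[ℱ t] fun ω => Sb t ω i)
    (hSameas : ∀ t i, Measurable[ℱ t] fun ω => Sa t ω i)
    (hb0 : ∀ t ω, Sb t ω 0 = 1) (ha0 : ∀ t ω, Sa t ω 0 = 1)
    (hbale : ∀ t ω, ∀ i : Fin d, Sb t ω i.succ ≤ Sa t ω i.succ)
    (Pi_ : Fin (T + 1) → Ω → Matrix (Fin (d + 1)) (Fin (d + 1)) ℝ)
    (hPi : ∀ t ω i j, Pi_ t ω i j = if i = j then 1 else Sa t ω j / Sb t ω i)
    (hR : RobustNoArbitrage P ℱ Pi_) :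
      ∃ Q : Measure Ω, IsProbabilityMeasure Q ∧ Q ≪ P ∧ P ≪ Q ∧
        ∃ S : Fin (T + 1) → Ω → Fin d → ℝ,
          Martingale S ℱ Q ∧
          ∀ t, ∀ i : Fin d, ∀ᵐ ω ∂P,
            S t ω i ∈ intrinsicInterior ℝ (Icc (Sb t ω i.succ) (Sa t ω i.succ)) := by
  obtain ⟨Pi', hPm, hPB, hPri, hPNA⟩ := hR
  let a' : Fin (T + 1) → Ω → Fin d → ℝ := fun t ω i => Pi' t ω 0 i.succ
  let b' : Fin (T + 1) → Ω → Fin d → ℝ := fun t ω i => 1 / Pi' t ω i.succ 0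
  let a : Fin (T + 1) → Ω → Fin d → ℝ := fun t ω i => (a' t ω i + Sa t ω i.succ) / 2
  let b : Fin (T + 1) → Ω → Fin d → ℝ := fun t ω i => (b' t ω i + Sb t ω i.succ) / 2
  have ha'm : ∀ t i, Measurable[ℱ t] fun ω => a' t ω i := fun t i => hPm t 0 i.succ
  have hb'm : ∀ t i, Measurable[ℱ t] fun ω => b' t ω i := fun t i =>
    measurable_const.div (hPm t i.succ 0)
  have ham : ∀ t i, Measurable[ℱ t] fun ω => a t ω i := fun t i =>
    ((ha'm t i).add (hSameas t i.succ)).div measurable_const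
  have hbm : ∀ t i, Measurable[ℱ t] fun ω => b t ω i := fun t i =>
    ((hb'm t i).add (hSbmeas t i.succ)).div measurable_const
  have hbaPrime : ∀ t ω i, b' t ω i ≤ a' t ω i := by
    intro t ω i
    simp only [a', b']
    rw [div_le_iff₀ ((hPB t ω).1 _ _)]
    have := (hPB t ω).2.2 0 0 i.succ
    rwa [(hPB t ω).2.1] at this
  have hmain : ∀ t, ∀ᵐ ω ∂P, ∀ i : Fin d,
      (Sb t ω i.succ < b' t ω i ∧ a' t ω i < Sa t ω i.succ) ∨
      (Sb t ω i.succ = Sa t ω i.succ ∧ b' t ω i = Sa t ω i.succ ∧ a' t ω i = Sa t ω i.succ) := by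
    intro t
    rw [ae_all_iff]
    intro i
    filter_upwards [hPri t 0 i.succ] with ω h
    have e1 : 1 / Pi_ t ω i.succ 0 = Sb t ω i.succ := by
      rw [hPi, if_neg (Fin.succ_ne_zero i), ha0, one_div_one_div]
    have e2 : Pi_ t ω 0 i.succ = Sa t ω i.succ := by
      rw [hPi, if_neg (Fin.succ_ne_zero i).symm, hb0, div_one]
    rw [e1, e2] at h
    have h1 := (mem_ri_Icc (hbale t ω i)).1 (h (left_mem_Icc.2 (hbaPrime t ω i)))
    have h2 := (mem_ri_Icc (hbale t ω i)).1 (h (right_mem_Icc.2 (hbaPrime t ω i)))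
    change (Sb t ω i.succ < b' t ω i ∧ b' t ω i < Sa t ω i.succ) ∨ _ at h1
    change (Sb t ω i.succ < a' t ω i ∧ a' t ω i < Sa t ω i.succ) ∨ _ at h2
    rcases h1 with h1 | h1
    · rcases h2 with h2 | h2
      · exact Or.inl ⟨h1.1, h2.2⟩
      · have := h1.1.trans h1.2
        exact absurd h2.1 this.ne
    · rcases h2 with h2 | h2
      · have := h2.1.trans h2.2
        exact absurd h1.1 this.ne
      · exact Or.inr ⟨h1.1, h1.2, h2.2⟩
  have hab : ∀ t, ∀ᵐ ω ∂P, ∀ i, b t ω i ≤ b' t ω i ∧ b' t ω i ≤ a' t ω i ∧ a' t ω i ≤ a t ω i := by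
    intro t
    filter_upwards [hmain t] with ω h i
    refine ⟨?_, hbaPrime t ω i, ?_⟩ <;> simp only [a, b] <;> rcases h i with h | h <;> linarith
  have hst : ∀ t, ∀ᵐ ω ∂P, ∀ i, (b t ω i < b' t ω i ∧ a' t ω i < a t ω i) ∨ b t ω i = a t ω i := by
    intro t
    filter_upwards [hmain t] with ω h i
    simp only [a, b]
    rcases h i with h | h
    · left; constructor <;> linarith
    · right; linarith
  obtain ⟨A, hA, hA1, hA2, hA3⟩ := attainable_closed P ℱ a b a' b' ha'm hb'm hab hst (by
    intro z hz hc hnn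
    refine hPNA (fun ω => ∑ t, z t ω) ⟨z, fun t => ⟨hz t, ?_⟩, fun ω => rfl⟩ ⟨?_, hnn⟩
    · filter_upwards [hc t] with ω h
      exact neg_mem_solvencyCone_of_cost _ (hPB t ω) _ h
    · exact Finset.measurable_fun_sum _ fun t _ => (hz t).mono (ℱ.mono (Fin.le_last t)) le_rfl)
  obtain ⟨Z, hZ, hZ0, hZA⟩ := kreps_yan P A hA hA2 hA3
  have hc : 0 < ∫ ω, Z ω 0 ∂P := by
    rw [integral_pos_iff_support_of_nonneg_ae (by filter_upwards [hZ0] with ω h using h.le) (hZ 0)]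
    have : Function.support (fun ω => Z ω 0) =ᵐ[P] univ := by
      rw [ae_eq_univ]
      rw [measure_eq_zero_iff_ae_notMem]
      filter_upwards [hZ0] with ω h
      simpa using h.ne'
    rw [measure_congr this]
    simp
  set c := ∫ ω, Z ω 0 ∂P with hcdef
  obtain ⟨Q, hQ1, hQ2, hQ3, S, hS, hSab⟩ := exists_martingale_of_density P ℱ a b ham hbm
    (by
      intro t
      filter_upwards [hab t] with ω h i
      exact (h i).1.trans ((h i).2.1.trans (h i).2.2))
    (fun ω i => c⁻¹ * Z ω i) (fun i => (hZ i).const_mul _)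
    (by filter_upwards [hZ0] with ω h using mul_pos (inv_pos.2 hc) h)
    (by
      intro t x hx hcx hbx
      have h1 := hZA x (hA1 t x hx hcx) hbx
      have h2 : ∫ ω, ∑ i, x ω i * (c⁻¹ * Z ω i) ∂P = c⁻¹ * ∫ ω, ∑ i, x ω i * Z ω i ∂P := by
        rw [← integral_const_mul]
        congr 1
        funext ω
        rw [Finset.mul_sum]
        exact Finset.sum_congr rfl fun i _ => by ring
      rw [h2]
      exact mul_nonpos_of_nonneg_of_nonpos (inv_nonneg.2 hc.le) h1)
    (by rw [integral_const_mul, ← hcdef, inv_mul_cancel₀ hc.ne'])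
  refine ⟨Q, hQ1, hQ2, hQ3, S, hS, fun t i => ?_⟩
  filter_upwards [hSab t i, hmain t] with ω h1 h2
  rw [mem_ri_Icc (hbale t ω i)]
  have h4 := hbaPrime t ω i
  simp only [a, b] at h1
  rcases h2 i with h3 | h3
  · left; constructor <;> linarith
  · right; exact ⟨h3.1, by linarith⟩

lemma one_step {Ω : Type*} {n : ℕ} {G m : MeasurableSpace Ω} (hG : G ≤ m) (Q : Measure Ω)
    [IsProbabilityMeasure Q] (X Y H : Ω → Fin n → ℝ)
    (hX : ∀ i, Integrable (fun ω => X ω i) Q) (hY : ∀ i, Integrable (fun ω => Y ω i) Q)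
    (hYm : ∀ i, Measurable[G] fun ω => Y ω i)
    (hXY : ∀ i B, MeasurableSet[G] B → ∫ ω in B, X ω i ∂Q = ∫ ω in B, Y ω i ∂Q)
    (hH : Measurable[G] H) (hnn : ∀ᵐ ω ∂Q, 0 ≤ ∑ i, H ω i * X ω i) :
    (∀ᵐ ω ∂Q, 0 ≤ ∑ i, H ω i * Y ω i) ∧
    ((∀ᵐ ω ∂Q, ∑ i, H ω i * Y ω i = 0) → ∀ᵐ ω ∂Q, ∑ i, H ω i * X ω i = 0) := by
  have hHi : ∀ i, Measurable[G] fun ω => H ω i := fun i => (measurable_pi_apply i).comp hH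
  have hce : ∀ i, (fun ω => Y ω i) =ᵐ[Q] Q[fun ω => X ω i | G] := fun i =>
    ae_eq_condExp_of_forall_setIntegral_eq hG (hX i) (fun B _ _ => (hY i).integrableOn)
      (fun B hB _ => (hXY i B hB).symm) (hYm i).stronglyMeasurable.aestronglyMeasurable
  have hnm : Measurable[G] fun ω => ‖H ω‖ := measurable_norm.comp hH
  have hkey : ∀ (D : Set Ω) (k : ℕ), MeasurableSet[G] D → (∀ ω ∈ D, ‖H ω‖ ≤ k) →
      IntegrableOn (fun ω => ∑ i, H ω i * X ω i) D Q ∧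
      IntegrableOn (fun ω => ∑ i, H ω i * Y ω i) D Q ∧
      ∫ ω in D, ∑ i, H ω i * X ω i ∂Q = ∫ ω in D, ∑ i, H ω i * Y ω i ∂Q := by
    intro D k hD hDk
    have hDm := hG _ hD
    let β : Fin n → Ω → ℝ := fun i => D.indicator fun ω => H ω i
    have hβ : ∀ i, StronglyMeasurable[G] (β i) := fun i =>
      ((hHi i).indicator hD).stronglyMeasurable
    have hβb : ∀ i ω, ‖β i ω‖ ≤ k := by
      intro i ω
      by_cases hω : ω ∈ D
      · simp only [β, indicator_of_mem hω]; exact (norm_le_pi_norm _ i).trans (hDk ω hω)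
      · simp [β, indicator_of_notMem hω]
    have hβe : ∀ i, ∀ ω ∈ D, β i ω = H ω i := fun i ω hω => by simp [β, indicator_of_mem hω]
    have i1 : ∀ i, Integrable (β i * fun ω => X ω i) Q := fun i =>
      (hX i).bdd_mul ((hβ i).mono hG).aestronglyMeasurable (ae_of_all _ (hβb i))
    have i2 : ∀ i, Integrable (β i * fun ω => Y ω i) Q := fun i =>
      (hY i).bdd_mul ((hβ i).mono hG).aestronglyMeasurable (ae_of_all _ (hβb i))
    have j1 : ∀ i, IntegrableOn (fun ω => H ω i * X ω i) D Q := fun i =>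
      (i1 i).integrableOn.congr_fun (fun ω hω => by simp [hβe i ω hω]) hDm
    have j2 : ∀ i, IntegrableOn (fun ω => H ω i * Y ω i) D Q := fun i =>
      (i2 i).integrableOn.congr_fun (fun ω hω => by simp [hβe i ω hω]) hDm
    refine ⟨integrable_finsetSum _ fun i _ => j1 i, integrable_finsetSum _ fun i _ => j2 i, ?_⟩
    rw [integral_finsetSum _ fun i _ => j1 i, integral_finsetSum _ fun i _ => j2 i]
    refine Finset.sum_congr rfl fun i _ => ?_
    have e1 : ∫ ω in D, H ω i * X ω i ∂Q = ∫ ω in D, (β i * fun ω => X ω i) ω ∂Q :=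
      setIntegral_congr_fun hDm fun ω hω => by simp [hβe i ω hω]
    have e2 : ∫ ω in D, H ω i * Y ω i ∂Q = ∫ ω in D, (β i * fun ω => Y ω i) ω ∂Q :=
      setIntegral_congr_fun hDm fun ω hω => by simp [hβe i ω hω]
    rw [e1, e2, ← setIntegral_condExp hG (i1 i) hD]
    refine integral_congr_ae (ae_restrict_of_ae ?_)
    filter_upwards [condExp_mul_of_stronglyMeasurable_left (hβ i) (i1 i) (hX i), hce i] with ω h1 h2
    rw [h1, Pi.mul_apply, Pi.mul_apply, h2]
  constructor
  · have hSm : Measurable[G] fun ω => ∑ i, H ω i * Y ω i :=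
      Finset.measurable_fun_sum _ fun i _ => (hHi i).mul (hYm i)
    have hnull : ∀ k : ℕ, Q ({ω | ∑ i, H ω i * Y ω i < 0} ∩ {ω | ‖H ω‖ ≤ k}) = 0 := by
      intro k
      have hD : MeasurableSet[G] ({ω | ∑ i, H ω i * Y ω i < 0} ∩ {ω | ‖H ω‖ ≤ k}) :=
        MeasurableSet.inter (measurableSet_lt hSm measurable_const)
          (measurableSet_le hnm measurable_const)
      obtain ⟨h1, h2, h3⟩ := hkey _ k hD fun ω hω => hω.2
      refine null_of_setIntegral_nonpos Q _ (hG _ hD) (fun ω => - ∑ i, H ω i * Y ω i) h2.neg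
        (ae_of_all _ fun ω hω => neg_pos.2 hω.1) ?_
      rw [integral_neg, ← h3, neg_nonpos]
      exact integral_nonneg_of_ae (ae_restrict_of_ae hnn)
    filter_upwards [ae_all_iff.2 fun k => measure_eq_zero_iff_ae_notMem.1 (hnull k)] with ω hω
    by_contra hlt
    obtain ⟨k, hk⟩ := exists_nat_ge ‖H ω‖
    exact hω k ⟨not_le.1 hlt, hk⟩
  · intro h0
    have hz : ∀ k : ℕ, ∀ᵐ ω ∂Q, ‖H ω‖ ≤ k → ∑ i, H ω i * X ω i = 0 := by
      intro k
      have hD : MeasurableSet[G] {ω | ‖H ω‖ ≤ k} := measurableSet_le hnm measurable_const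
      obtain ⟨h1, h2, h3⟩ := hkey _ k hD fun ω hω => hω
      have h4 : ∫ ω in {ω | ‖H ω‖ ≤ k}, ∑ i, H ω i * Y ω i ∂Q = 0 := by
        have h5 : (fun ω => ∑ i, H ω i * Y ω i) =ᵐ[Q] fun _ => (0 : ℝ) := h0
        rw [integral_congr_ae (ae_restrict_of_ae h5)]
        simp
      rw [h4] at h3
      exact (ae_restrict_iff' (hG _ hD)).1
        ((integral_eq_zero_iff_of_nonneg_ae (ae_restrict_of_ae hnn) h1).1 h3)
    filter_upwards [ae_all_iff.2 hz] with ω hω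
    obtain ⟨k, hk⟩ := exists_nat_ge ‖H ω‖
    exact hω k hk

lemma no_arbitrage_of_martingale {Ω : Type*} {n T : ℕ} {m : MeasurableSpace Ω} (Q : Measure Ω)
    [IsProbabilityMeasure Q] (ℱ : Filtration (Fin (T + 1)) m)
    (S : Fin (T + 1) → Ω → Fin n → ℝ)
    (hSi : ∀ t i, Integrable (fun ω => S t ω i) Q)
    (hSm : ∀ t i, Measurable[ℱ t] fun ω => S t ω i)
    (hmart : ∀ s t, s ≤ t → ∀ i B, MeasurableSet[ℱ s] B →
      ∫ ω in B, S t ω i ∂Q = ∫ ω in B, S s ω i ∂Q)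
    (hpos : ∀ t, ∀ᵐ ω ∂Q, ∀ i, 0 < S t ω i)
    (xs : Fin (T + 1) → Ω → Fin n → ℝ) (hxs : ∀ t, Measurable[ℱ t] (xs t))
    (hc : ∀ t, ∀ᵐ ω ∂Q, ∑ i, xs t ω i * S t ω i ≤ 0)
    (hnn : ∀ᵐ ω ∂Q, ∀ i, 0 ≤ (∑ t, xs t ω) i) : ∀ᵐ ω ∂Q, ∑ t, xs t ω = 0 := by
  let H : Fin (T + 1) → Ω → Fin n → ℝ := fun t ω => ∑ s ∈ Finset.Iic t, xs s ω
  have hHm : ∀ t, Measurable[ℱ t] (H t) := fun t =>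
    Finset.measurable_fun_sum _ fun s hs => (hxs s).mono (ℱ.mono (Finset.mem_Iic.1 hs)) le_rfl
  have hHlast : ∀ ω, H (Fin.last T) ω = ∑ t, xs t ω := by
    intro ω
    have : (Finset.Iic (Fin.last T)) = Finset.univ := by
      ext s; simp [Fin.le_last]
    simp only [H, this]
  have hH0 : ∀ ω, H 0 ω = xs 0 ω := by
    intro ω
    have : (Finset.Iic (0 : Fin (T + 1))) = {0} := by
      ext s; simp
    simp only [H, this, Finset.sum_singleton]
  have hHs : ∀ (t : Fin T) ω, H t.succ ω = H t.castSucc ω + xs t.succ ω := by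
    intro t ω
    have : Finset.Iic t.succ = insert t.succ (Finset.Iic t.castSucc) := by
      ext s
      simp only [Finset.mem_insert, Finset.mem_Iic, Fin.le_def, Fin.ext_iff, Fin.val_succ,
        Fin.val_castSucc]
      omega
    simp only [H, this]
    rw [Finset.sum_insert, add_comm]
    simp [Fin.le_def]
  have hsplit : ∀ (t : Fin T) ω, ∑ i, H t.succ ω i * S t.succ ω i =
      ∑ i, H t.castSucc ω i * S t.succ ω i + ∑ i, xs t.succ ω i * S t.succ ω i := by
    intro t ω
    rw [hHs, ← Finset.sum_add_distrib]
    exact Finset.sum_congr rfl fun i _ => by rw [Pi.add_apply]; ring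
  have hstep := fun (t : Fin T) => one_step (ℱ.le t.castSucc) Q (S t.succ) (S t.castSucc)
    (H t.castSucc) (hSi _) (hSi _) (hSm _)
    (fun i B hB => hmart t.castSucc t.succ (Fin.castSucc_le_succ t) i B hB) (hHm t.castSucc)
  have hmid : ∀ t : Fin T, (∀ᵐ ω ∂Q, 0 ≤ ∑ i, H t.succ ω i * S t.succ ω i) →
      ∀ᵐ ω ∂Q, 0 ≤ ∑ i, H t.castSucc ω i * S t.succ ω i := by
    intro t h
    filter_upwards [h, hc t.succ] with ω h1 h2
    rw [hsplit] at h1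
    linarith
  have hback : ∀ t, ∀ᵐ ω ∂Q, 0 ≤ ∑ i, H t ω i * S t ω i := by
    intro t
    induction t using Fin.reverseInduction with
    | last =>
      filter_upwards [hnn, hpos (Fin.last T)] with ω h1 h2
      rw [hHlast]
      exact Finset.sum_nonneg fun i _ => mul_nonneg (h1 i) (h2 i).le
    | cast t ih => exact (hstep t (hmid t ih)).1
  have hforw : ∀ t, ∀ᵐ ω ∂Q, ∑ i, H t ω i * S t ω i = 0 := by
    intro t
    induction t using Fin.induction with
    | zero =>
      filter_upwards [hback 0, hc 0] with ω h1 h2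
      refine le_antisymm ?_ h1
      rw [hH0]; exact h2
    | succ t ih =>
      filter_upwards [hback t.succ, hc t.succ, (hstep t (hmid t (hback t.succ))).2 ih] with ω h1 h2 h3
      refine le_antisymm ?_ h1
      rw [hsplit, h3, zero_add]; exact h2
  filter_upwards [hforw (Fin.last T), hnn, hpos (Fin.last T)] with ω h1 h2 h3
  rw [hHlast] at h1
  funext i
  have := (Finset.sum_eq_zero_iff_of_nonneg fun i _ => mul_nonneg (h2 i) (h3 i).le).1 h1 i
    (Finset.mem_univ i)
  exact (mul_eq_zero.1 this).resolve_right (h3 i).ne'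

lemma solvencyCone_subset_halfspace {n : ℕ} (M : Matrix (Fin n) (Fin n) ℝ) (s : Fin n → ℝ)
    (hs : ∀ i, 0 < s i) (hM : ∀ i j, M i j = s j / s i) (v : Fin n → ℝ)
    (hv : v ∈ solvencyCone M) : 0 ≤ ∑ i, v i * s i := by
  refine hv {v | 0 ≤ ∑ i, v i * s i} ⟨?_, ?_, ?_, ?_⟩
  · rintro _ (⟨i, rfl⟩ | ⟨i, j, rfl⟩)
    · change 0 ≤ ∑ k, (Pi.single i 1 : Fin n → ℝ) k * s k
      refine Finset.sum_nonneg fun k _ => mul_nonneg ?_ (hs k).le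
      exact (Pi.single_nonneg.2 zero_le_one : (0 : Fin n → ℝ) ≤ Pi.single i 1) k
    · change 0 ≤ ∑ k, (M i j • (Pi.single i 1 : Fin n → ℝ) - Pi.single j 1 : Fin n → ℝ) k * s k
      have : ∑ k, (M i j • (Pi.single i 1 : Fin n → ℝ) - Pi.single j 1 : Fin n → ℝ) k * s k = 0 := by
        simp only [Pi.sub_apply, Pi.smul_apply, smul_eq_mul, sub_mul, Finset.sum_sub_distrib,
          Pi.single_apply, mul_ite, mul_one, mul_zero, ite_mul, zero_mul, one_mul]
        simp only [Finset.sum_ite_eq', Finset.mem_univ, if_true]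
        rw [hM, div_mul_cancel₀ _ (hs i).ne', sub_self]
      exact this.ge
  · exact isClosed_le continuous_const (by fun_prop)
  · intro x hx y hy a b ha hb _
    change 0 ≤ ∑ i, (a • x + b • y) i * s i
    have : ∑ i, (a • x + b • y) i * s i = a * ∑ i, x i * s i + b * ∑ i, y i * s i := by
      rw [Finset.mul_sum, Finset.mul_sum, ← Finset.sum_add_distrib]
      exact Finset.sum_congr rfl fun i _ => by simp; ring
    rw [this]
    exact add_nonneg (mul_nonneg ha hx) (mul_nonneg hb hy)
  · intro x hx c hc
    change 0 ≤ ∑ i, (c • x) i * s i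
    have : ∑ i, (c • x) i * s i = c * ∑ i, x i * s i := by
      rw [Finset.mul_sum]
      exact Finset.sum_congr rfl fun i _ => by simp; ring
    rw [this]
    exact mul_nonneg hc hx

lemma div_mem_ri {b₁ a₁ s₁ b₂ a₂ s₂ : ℝ} (h1 : 0 < b₁) (h2 : 0 < b₂) (hb1 : b₁ ≤ a₁) (hb2 : b₂ ≤ a₂)
    (hs1 : s₁ ∈ intrinsicInterior ℝ (Icc b₁ a₁)) (hs2 : s₂ ∈ intrinsicInterior ℝ (Icc b₂ a₂)) :
    s₂ / s₁ ∈ intrinsicInterior ℝ (Icc (b₂ / a₁) (a₂ / b₁)) := by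
  have ha1 : 0 < a₁ := h1.trans_le hb1
  have hle : b₂ / a₁ ≤ a₂ / b₁ := div_le_div₀ (h2.le.trans hb2) hb2 h1 hb1
  rw [mem_ri_Icc hb1] at hs1
  rw [mem_ri_Icc hb2] at hs2
  rw [mem_ri_Icc hle]
  rcases hs1 with ⟨p1, p2⟩ | ⟨p1, p2⟩ <;> rcases hs2 with ⟨q1, q2⟩ | ⟨q1, q2⟩
  · left
    have hs : 0 < s₁ := h1.trans p1
    rw [div_lt_div_iff₀ ha1 hs, div_lt_div_iff₀ hs h1]
    constructor <;> nlinarith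
  · left
    have hs : 0 < s₁ := h1.trans p1
    rw [div_lt_div_iff₀ ha1 hs, div_lt_div_iff₀ hs h1]
    subst q1 q2
    constructor <;> nlinarith
  · left
    subst p1 p2
    exact ⟨div_lt_div_of_pos_right q1 h1, div_lt_div_of_pos_right q2 h1⟩
  · right
    subst p1 p2 q1 q2
    exact ⟨rfl, rfl⟩

lemma backward_direction
    {Ω : Type*} {d T : ℕ}
    {m : MeasurableSpace Ω} (P : Measure Ω)
    (ℱ : Filtration (Fin (T + 1)) m)
    (Sb Sa : Fin (T + 1) → Ω → Fin (d + 1) → ℝ)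
    (hb0 : ∀ t ω, Sb t ω 0 = 1) (ha0 : ∀ t ω, Sa t ω 0 = 1)
    (hpos : ∀ t ω, ∀ i : Fin d, 0 < Sb t ω i.succ)
    (hbale : ∀ t ω, ∀ i : Fin d, Sb t ω i.succ ≤ Sa t ω i.succ)
    (Pi_ : Fin (T + 1) → Ω → Matrix (Fin (d + 1)) (Fin (d + 1)) ℝ)
    (hPi : ∀ t ω i j, Pi_ t ω i j = if i = j then 1 else Sa t ω j / Sb t ω i)
    (Q : Measure Ω) (hQ : IsProbabilityMeasure Q) (hQP : Q ≪ P) (hPQ : P ≪ Q)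
    (S : Fin (T + 1) → Ω → Fin d → ℝ) (hS : Martingale S ℱ Q)
    (hSri : ∀ t, ∀ i : Fin d, ∀ᵐ ω ∂P,
            S t ω i ∈ intrinsicInterior ℝ (Icc (Sb t ω i.succ) (Sa t ω i.succ))) :
    RobustNoArbitrage P ℱ Pi_ := by
  classical
  let R : Fin (T + 1) → Ω → Fin (d + 1) → ℝ := fun t ω => Fin.cons 1 (S t ω)
  have hSmv : ∀ t, Measurable[ℱ t] (S t) := fun t => (hS.1 t).measurable
  have hSm : ∀ t i, Measurable[ℱ t] fun ω => S t ω i := fun t i =>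
    (measurable_pi_apply i).comp (hSmv t)
  have hRm : ∀ t i, Measurable[ℱ t] fun ω => R t ω i := by
    intro t i
    refine Fin.cases ?_ (fun i => ?_) i
    · simp only [R, Fin.cons_zero]; exact measurable_const
    · simp only [R, Fin.cons_succ]; exact hSm t i
  have hSi : ∀ t i, Integrable (fun ω => S t ω i) Q := fun t i => (hS.integrable t).eval i
  have hRi : ∀ t i, Integrable (fun ω => R t ω i) Q := by
    intro t i
    refine Fin.cases ?_ (fun i => ?_) i
    · simp only [R, Fin.cons_zero]; exact integrable_const _
    · simp only [R, Fin.cons_succ]; exact hSi t i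
  have hRmart : ∀ s t, s ≤ t → ∀ i B, MeasurableSet[ℱ s] B →
      ∫ ω in B, R t ω i ∂Q = ∫ ω in B, R s ω i ∂Q := by
    intro s t hst i B hB
    refine Fin.cases ?_ (fun i => ?_) i
    · simp only [R, Fin.cons_zero]
    · simp only [R, Fin.cons_succ]
      have h1 := congrFun (hS.setIntegral_eq hst hB) i
      rw [eval_integral (fun i => (hSi s i).integrableOn),
        eval_integral (fun i => (hSi t i).integrableOn)] at h1
      exact h1.symm
  have hSb : ∀ t ω i, 0 < Sb t ω i := by
    intro t ω i
    refine Fin.cases ?_ (fun i => ?_) i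
    · rw [hb0]; exact one_pos
    · exact hpos t ω i
  have hSba : ∀ t ω i, Sb t ω i ≤ Sa t ω i := by
    intro t ω i
    refine Fin.cases ?_ (fun i => ?_) i
    · rw [hb0, ha0]
    · exact hbale t ω i
  have hRri : ∀ t, ∀ᵐ ω ∂P, ∀ i, R t ω i ∈ intrinsicInterior ℝ (Icc (Sb t ω i) (Sa t ω i)) := by
    intro t
    filter_upwards [ae_all_iff.2 (hSri t)] with ω h i
    refine Fin.cases ?_ (fun i => ?_) i
    · rw [hb0, ha0, Icc_self, intrinsicInterior_singleton]; simp [R]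
    · simp only [R, Fin.cons_succ]; exact h i
  have hRpos : ∀ t, ∀ᵐ ω ∂P, ∀ i, 0 < R t ω i := by
    intro t
    filter_upwards [hRri t] with ω h i
    exact (hSb t ω i).trans_le (intrinsicInterior_subset (h i)).1
  let R' : Fin (T + 1) → Ω → Fin (d + 1) → ℝ := fun t ω i => if 0 < R t ω i then R t ω i else 1
  have hR'pos : ∀ t ω i, 0 < R' t ω i := by
    intro t ω i
    simp only [R']
    split_ifs with h
    · exact h
    · exact one_pos
  have hR'm : ∀ t i, Measurable[ℱ t] fun ω => R' t ω i := fun t i =>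
    Measurable.ite (measurableSet_lt measurable_const (hRm t i)) (hRm t i) measurable_const
  have hR'R : ∀ t, ∀ᵐ ω ∂P, R' t ω = R t ω := by
    intro t
    filter_upwards [hRpos t] with ω h
    funext i
    simp [R', h i]
  refine ⟨fun t ω i j => R' t ω j / R' t ω i, fun t i j => (hR'm t j).div (hR'm t i),
    fun t ω => ⟨fun i j => div_pos (hR'pos _ _ _) (hR'pos _ _ _),
      fun i => div_self (hR'pos _ _ _).ne', fun i j k => ?_⟩, fun t i j => ?_, ?_⟩
  · have hi := (hR'pos t ω i).ne'
    have hk := (hR'pos t ω k).ne'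
    refine le_of_eq ?_
    field_simp
  · filter_upwards [hRri t, hR'R t] with ω h1 h2
    rw [one_div_div, Icc_self, singleton_subset_iff, h2, hPi, hPi]
    by_cases hij : i = j
    · subst hij
      have : 0 < R t ω i := by rw [← h2]; exact hR'pos t ω i
      simp [div_self this.ne']
    · rw [if_neg hij, if_neg (Ne.symm hij), one_div_div]
      exact div_mem_ri (hSb t ω i) (hSb t ω j) (hSba t ω i) (hSba t ω j) (h1 i) (h1 j)
  · rintro x ⟨xs, hxs, hx⟩ ⟨-, hxnn⟩
    have hfin := no_arbitrage_of_martingale Q ℱ R hRi hRm hRmart (fun t => hQP.ae_le (hRpos t)) xs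
      (fun t => (hxs t).1) (fun t => hQP.ae_le (by
        filter_upwards [(hxs t).2, hR'R t] with ω h1 h2
        have h3 := solvencyCone_subset_halfspace _ (R' t ω) (hR'pos t ω) (fun i j => rfl) _ h1
        rw [h2] at h3
        simp only [Pi.neg_apply, neg_mul, Finset.sum_neg_distrib] at h3
        linarith)) (hQP.ae_le (by
        filter_upwards [hxnn] with ω h i
        rw [hx]
        exact h i))
    filter_upwards [hPQ.ae_le hfin] with ω h
    rw [← hx]; exact h

/-- Market model with a bank account (asset `0`; the other `d` assets are
indexed by `i.succ`, `i : Fin d`, so there are `d + 1 ≥ 2` assets in total):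
NAʳ holds iff there exist a probability measure `Q` equivalent to `P` and a
`d`-dimensional `Q`-martingale `S` adapted to `(𝔉_t)` with
`S_t^i(ω) ∈ ri [S_t^{b,i}(ω), S_t^{a,i}(ω)]` a.e. for all `i`, `t`. -/
theorem bank_account_robust_no_arbitrage_iff
    {Ω : Type*} {d T : ℕ} (hd : 1 ≤ d)
    {m : MeasurableSpace Ω} (P : Measure Ω) [IsProbabilityMeasure P]
    (ℱ : Filtration (Fin (T + 1)) m)
    (hcomplete : ∀ t : Fin (T + 1), ∀ s : Set Ω,
      MeasurableSet[m] s → P s = 0 → MeasurableSet[ℱ t] s)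
    (Sb Sa : Fin (T + 1) → Ω → Fin (d + 1) → ℝ)
    (hSbmeas : ∀ t i, Measurable[ℱ t] fun ω => Sb t ω i)
    (hSameas : ∀ t i, Measurable[ℱ t] fun ω => Sa t ω i)
    (hb0 : ∀ t ω, Sb t ω 0 = 1) (ha0 : ∀ t ω, Sa t ω 0 = 1)
    (hpos : ∀ t ω, ∀ i : Fin d, 0 < Sb t ω i.succ)
    (hbale : ∀ t ω, ∀ i : Fin d, Sb t ω i.succ ≤ Sa t ω i.succ)
    (Pi_ : Fin (T + 1) → Ω → Matrix (Fin (d + 1)) (Fin (d + 1)) ℝ)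
    (hPi : ∀ t ω i j, Pi_ t ω i j = if i = j then 1 else Sa t ω j / Sb t ω i) :
    RobustNoArbitrage P ℱ Pi_ ↔
      ∃ Q : Measure Ω, IsProbabilityMeasure Q ∧ Q ≪ P ∧ P ≪ Q ∧
        ∃ S : Fin (T + 1) → Ω → Fin d → ℝ,
          Martingale S ℱ Q ∧
          ∀ t, ∀ i : Fin d, ∀ᵐ ω ∂P,
            S t ω i ∈ intrinsicInterior ℝ (Icc (Sb t ω i.succ) (Sa t ω i.succ)) := by
  refine ⟨forward_direction P ℱ Sb Sa hSbmeas hSameas hb0 ha0 hbale Pi_ hPi, ?_⟩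
  rintro ⟨Q, hQ, hQP, hPQ, S, hS, hSri⟩
  exact backward_direction P ℱ Sb Sa hb0 ha0 hpos hbale Pi_ hPi Q hQ hQP hPQ S hS hSri
end

section
/- Let (Ω,𝔉,P) be a probability space and ℋ ⊆ 𝔉 a P-complete sub-σ-algebra. Let F_1, F_2, F be ℋ-measurable set-valued maps from Ω to the nonempty closed subsets of ℝ^d (ℋ-measurable meaning {ω : F(ω) ∩ V ≠ ∅} ∈ ℋ for every open V ⊆ ℝ^d) such that F_1(ω) + F_2(ω) = F(ω) (Minkowski sum) for a.e. ω. Then L⁰(F_1,ℋ) + L⁰(F_2,ℋ) = L⁰(F,ℋ); that is, a function ξ:Ω→ℝ^d is ℋ-measurable with ξ(ω)∈F(ω) a.e. if and only if ξ = ξ_1 + ξ_2 for some ℋ-measurable functions ξ_i with ξ_i(ω) ∈ F_i(ω) a.e. (i=1,2). -/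
open MeasureTheory Set Pointwise

/-- A set-valued map `F : Ω → Set (ℝ^d)` is `ℋ`-measurable if
`{ω : F(ω) ∩ V ≠ ∅} ∈ ℋ` for every open `V`. -/
def SetValuedMeasurable {Ω : Type*} {d : ℕ} (H : MeasurableSpace Ω)
    (F : Ω → Set (Fin d → ℝ)) : Prop :=
  ∀ V : Set (Fin d → ℝ), IsOpen V → MeasurableSet[H] {ω | (F ω ∩ V).Nonempty}

/-- Compact-hit measurability of the zero set of a Caratheodory function. -/
theorem aux_compact_hit {Ω E : Type*} [MeasurableSpace Ω] [PseudoMetricSpace E]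
    (f : Ω → E → ℝ) (hm : ∀ x, Measurable fun ω => f ω x) (hc : ∀ ω, Continuous (f ω))
    (h0 : ∀ ω x, 0 ≤ f ω x) (K : Set E) (hK : IsCompact K) :
    MeasurableSet {ω | ({x | f ω x = 0} ∩ K).Nonempty} := by
  obtain ⟨D, hDK, hD, hKD⟩ := hK.isSeparable.exists_countable_dense_subset
  have : {ω | ({x | f ω x = 0} ∩ K).Nonempty}
      = ⋂ n : ℕ, ⋃ x ∈ D, {ω | f ω x < 1 / ((n : ℝ) + 1)} := by
    ext ω
    simp only [mem_ofPred_eq, mem_iInter, mem_iUnion, exists_prop]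
    constructor
    · rintro ⟨x, hx, hxK⟩ n
      have hopen : IsOpen {y | f ω y < 1 / ((n : ℝ) + 1)} :=
        isOpen_lt (hc ω) continuous_const
      have hx' : x ∈ {y | f ω y < 1 / ((n : ℝ) + 1)} := by
        have hx0 : f ω x = 0 := hx
        simp only [mem_ofPred_eq, hx0]
        positivity
      obtain ⟨y, hy, hyD⟩ := mem_closure_iff.1 (hKD hxK) _ hopen hx'
      exact ⟨y, hyD, hy⟩
    · intro h
      obtain ⟨y0, hy0, -⟩ := h 0
      obtain ⟨x, hxK, hx⟩ := hK.exists_isMinOn ⟨y0, hDK hy0⟩ (hc ω).continuousOn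
      refine ⟨x, ?_, hxK⟩
      refine le_antisymm ?_ (h0 ω x)
      refine le_of_forall_pos_lt_add fun ε hε => ?_
      obtain ⟨n, hn⟩ := exists_nat_one_div_lt hε
      obtain ⟨y, hyD, hy⟩ := h n
      have := isMinOn_iff.1 hx y (hDK hyD)
      linarith
  rw [this]
  exact MeasurableSet.iInter fun n => MeasurableSet.biUnion hD fun x _ =>
    measurableSet_lt (hm x) measurable_const

/-- Closed nonempty values, with measurable compact hits. -/
def AuxGood {Ω E : Type*} [MeasurableSpace Ω] [TopologicalSpace E] (G : Ω → Set E) : Prop :=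
  (∀ ω, IsClosed (G ω)) ∧ (∀ ω, (G ω).Nonempty) ∧
    ∀ K, IsCompact K → MeasurableSet {ω | (G ω ∩ K).Nonempty}

theorem aux_step {Ω E : Type*} [MeasurableSpace Ω] [MetricSpace E] [ProperSpace E]
    [MeasurableSpace E] [BorelSpace E]
    (G : Ω → Set E) (hG : AuxGood G) (ε : ℝ) (hε : 0 < ε) :
    ∃ q : Ω → E, Measurable q ∧ AuxGood fun ω => G ω ∩ Metric.closedBall (q ω) ε := by
  classical
  obtain ⟨hcl, hne, hK⟩ := hG
  rcases isEmpty_or_nonempty E with hE | hE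
  · have : IsEmpty Ω := ⟨fun ω => hE.elim (hne ω).some⟩
    refine ⟨fun ω => isEmptyElim ω, ?_, fun ω => isEmptyElim ω, fun ω => isEmptyElim ω, ?_⟩
    · exact measurable_of_empty _
    · intro K _
      rw [Set.eq_empty_of_isEmpty {ω | _}]
      exact MeasurableSet.empty
  let u := TopologicalSpace.denseSeq E
  have hex : ∀ ω, ∃ k, (G ω ∩ Metric.closedBall (u k) ε).Nonempty := by
    intro ω
    obtain ⟨x, hx⟩ := hne ω
    obtain ⟨k, hk⟩ := (TopologicalSpace.denseRange_denseSeq E).exists_dist_lt x hε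
    exact ⟨k, x, hx, hk.le⟩
  let k : Ω → ℕ := fun ω => Nat.find (hex ω)
  have hk : Measurable k :=
    measurable_find hex fun j => hK _ (isCompact_closedBall _ _)
  refine ⟨fun ω => u (k ω), (measurable_from_nat (f := u)).comp hk, ?_, ?_, ?_⟩
  · exact fun ω => (hcl ω).inter Metric.isClosed_closedBall
  · exact fun ω => Nat.find_spec (hex ω)
  · intro K hKc
    have : {ω | (G ω ∩ Metric.closedBall (u (k ω)) ε ∩ K).Nonempty}
        = ⋃ j : ℕ, (k ⁻¹' {j} ∩ {ω | (G ω ∩ (Metric.closedBall (u j) ε ∩ K)).Nonempty}) := by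
      ext ω
      simp [inter_assoc]
    rw [this]
    exact MeasurableSet.iUnion fun j => (hk (measurableSet_singleton j)).inter
      (hK _ ((isCompact_closedBall _ _).inter hKc))

/-- Measurable selection. -/
theorem aux_selection {Ω E : Type*} [MeasurableSpace Ω] [MetricSpace E] [ProperSpace E]
    [MeasurableSpace E] [BorelSpace E] (G : Ω → Set E) (hG : AuxGood G) :
    ∃ g : Ω → E, Measurable g ∧ ∀ ω, g ω ∈ G ω := by
  have hpos : ∀ n : ℕ, (0 : ℝ) < (1 / 2 : ℝ) ^ n := fun n => by positivity
  choose q hqm hq using fun (G : {G : Ω → Set E // AuxGood G}) (n : ℕ) =>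
    aux_step G.1 G.2 _ (hpos n)
  let S : ℕ → {G : Ω → Set E // AuxGood G} := fun n =>
    Nat.rec ⟨G, hG⟩ (fun n A => ⟨_, hq A n⟩) n
  have hS : ∀ n ω, (S (n + 1)).1 ω
      = (S n).1 ω ∩ Metric.closedBall (q (S n) n ω) ((1 / 2 : ℝ) ^ n) := fun n ω => rfl
  have hne : ∀ ω, (⋂ n, (S (n + 1)).1 ω).Nonempty := by
    intro ω
    refine IsCompact.nonempty_iInter_of_sequence_nonempty_isCompact_isClosed _ ?_ ?_ ?_ ?_
    · intro n
      rw [hS (n + 1)]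
      exact inter_subset_left
    · exact fun n => (S (n + 1)).2.2.1 ω
    · rw [hS 0]
      exact (isCompact_closedBall _ _).inter_left ((S 0).2.1 ω)
    · exact fun n => (S (n + 1)).2.1 ω
  choose g hg using hne
  refine ⟨g, ?_, ?_⟩
  · refine measurable_of_tendsto_metrizable (f := fun n => q (S n) n) (fun n => hqm _ _) ?_
    rw [tendsto_pi_nhds]
    intro ω
    rw [tendsto_iff_dist_tendsto_zero]
    refine squeeze_zero (fun _ => dist_nonneg) (fun n => ?_)
      (tendsto_pow_atTop_nhds_zero_of_lt_one (r := (1 / 2 : ℝ)) (by norm_num) (by norm_num))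
    have h := mem_iInter.1 (hg ω) n
    rw [hS n] at h
    rw [dist_comm]
    exact h.2
  · intro ω
    have h := mem_iInter.1 (hg ω) 0
    rw [hS 0] at h
    exact h.1

theorem aux_comp {Ω : Type*} {d : ℕ} [MeasurableSpace Ω] (u : (Fin d → ℝ) → Ω → ℝ)
    (hc : ∀ ω, Continuous fun x => u x ω) (hm : ∀ x, Measurable (u x))
    (ξ : Ω → Fin d → ℝ) (hξ : Measurable ξ) : Measurable fun ω => u (ξ ω) ω := by
  have h2 : Measurable (Function.uncurry u) :=
    measurable_uncurry_of_continuous_of_measurable hc hm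
  have h3 : Measurable fun ω => (ξ ω, ω) := hξ.prodMk measurable_id
  exact h2.comp h3

theorem aux_infDist {Ω : Type*} {d : ℕ} [H : MeasurableSpace Ω] (F : Ω → Set (Fin d → ℝ))
    (hF : SetValuedMeasurable H F) (hne : ∀ ω, (F ω).Nonempty)
    (ξ : Ω → Fin d → ℝ) (hξ : Measurable ξ) :
    Measurable fun ω => Metric.infDist (ξ ω) (F ω) := by
  have h1 : ∀ x, Measurable fun ω => Metric.infDist x (F ω) := by
    intro x
    refine measurable_of_Iio fun r => ?_
    convert hF (Metric.ball x r) Metric.isOpen_ball using 1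
    ext ω
    simp only [mem_preimage, mem_Iio, Metric.infDist_lt_iff (hne ω), mem_ofPred_eq]
    constructor
    · rintro ⟨y, hy, h⟩
      exact ⟨y, hy, by rwa [Metric.mem_ball, dist_comm]⟩
    · rintro ⟨y, hy, h⟩
      exact ⟨y, hy, by rwa [Metric.mem_ball, dist_comm] at h⟩
  exact aux_comp (fun x ω => Metric.infDist x (F ω))
    (fun ω => Metric.continuous_infDist_pt (F ω)) h1 ξ hξ

theorem aux_add {Ω : Type*} {d : ℕ} [MeasurableSpace Ω] (f g : Ω → Fin d → ℝ)
    (hf : Measurable f) (hg : Measurable g) : Measurable (f + g) := hf.add hg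

theorem aux_sub {Ω : Type*} {d : ℕ} [MeasurableSpace Ω] (f g : Ω → Fin d → ℝ)
    (hf : Measurable f) (hg : Measurable g) : Measurable (f - g) := hf.sub hg

theorem aux_exists {Ω : Type*} {d : ℕ} [H : MeasurableSpace Ω] (F₁ F₂ : Ω → Set (Fin d → ℝ))
    (hF₁ : SetValuedMeasurable H F₁) (hF₂ : SetValuedMeasurable H F₂)
    (hne₁ : ∀ ω, (F₁ ω).Nonempty) (hne₂ : ∀ ω, (F₂ ω).Nonempty)
    (hcl₁ : ∀ ω, IsClosed (F₁ ω)) (hcl₂ : ∀ ω, IsClosed (F₂ ω))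
    (ξ : Ω → Fin d → ℝ) (hξ : Measurable ξ) (B : Set Ω) (hB : MeasurableSet B)
    (h : ∀ ω ∉ B, ξ ω ∈ F₁ ω + F₂ ω) :
    ∃ g : Ω → Fin d → ℝ, Measurable g ∧ ∀ ω ∉ B, g ω ∈ F₁ ω ∧ ξ ω - g ω ∈ F₂ ω := by
  classical
  let f : Ω → (Fin d → ℝ) → ℝ := fun ω x =>
    if ω ∈ B then 0 else Metric.infDist x (F₁ ω) + Metric.infDist (ξ ω - x) (F₂ ω)
  have hm : ∀ x, Measurable fun ω => f ω x := fun x =>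
    Measurable.ite hB measurable_const
      ((aux_infDist F₁ hF₁ hne₁ _ measurable_const).add
        (aux_infDist F₂ hF₂ hne₂ _ (hξ.sub measurable_const)))
  have hc : ∀ ω, Continuous (f ω) := by
    intro ω
    by_cases hω : ω ∈ B
    · simp only [f, hω, if_true]
      exact continuous_const
    · simp only [f, hω, if_false]
      exact (Metric.continuous_infDist_pt _).add
        ((Metric.continuous_infDist_pt _).comp (continuous_const.sub continuous_id))
  have h0 : ∀ ω x, 0 ≤ f ω x := by
    intro ω x
    by_cases hω : ω ∈ B
    · simp [f, hω]
    · simp only [f, hω, if_false]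
      exact add_nonneg Metric.infDist_nonneg Metric.infDist_nonneg
  obtain ⟨g, hg, hgf⟩ := aux_selection (fun ω => {x | f ω x = 0})
    ⟨fun ω => isClosed_eq (hc ω) continuous_const, by
      intro ω
      by_cases hω : ω ∈ B
      · exact ⟨0, by simp [f, hω]⟩
      · obtain ⟨a, ha, b, hb, hab⟩ := Set.mem_add.1 (h ω hω)
        refine ⟨a, ?_⟩
        have hb' : ξ ω - a = b := by rw [← hab]; simp
        simp only [f, hω, if_false, mem_ofPred_eq, hb',
          Metric.infDist_zero_of_mem ha, Metric.infDist_zero_of_mem hb, add_zero],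
      aux_compact_hit f hm hc h0⟩
  refine ⟨g, hg, fun ω hω => ?_⟩
  have h1 : f ω (g ω) = 0 := hgf ω
  simp only [f, hω, if_false] at h1
  have h2 := Metric.infDist_nonneg (x := g ω) (s := F₁ ω)
  have h3 := Metric.infDist_nonneg (x := ξ ω - g ω) (s := F₂ ω)
  exact ⟨((hcl₁ ω).mem_iff_infDist_zero (hne₁ ω)).2 (by linarith),
    ((hcl₂ ω).mem_iff_infDist_zero (hne₂ ω)).2 (by linarith)⟩

/-- Lemma 2: if `ℋ`-measurable set-valued maps `F₁, F₂, F` with nonempty closed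
values in `ℝ^d` satisfy `F₁(ω) + F₂(ω) = F(ω)` a.e. (Minkowski sum), then
`L⁰(F₁,ℋ) + L⁰(F₂,ℋ) = L⁰(F,ℋ)`: an `ℋ`-measurable `ξ` satisfies `ξ(ω) ∈ F(ω)`
a.e. iff `ξ = ξ₁ + ξ₂` with `ξᵢ` `ℋ`-measurable and `ξᵢ(ω) ∈ Fᵢ(ω)` a.e. -/
theorem L0_sum_of_setValued_sum
    {Ω : Type*} {d : ℕ} {m : MeasurableSpace Ω} (P : Measure Ω)
    [IsProbabilityMeasure P]
    (H : MeasurableSpace Ω) (hHm : H ≤ m)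
    (hcomplete : ∀ s : Set Ω, MeasurableSet[m] s → P s = 0 → MeasurableSet[H] s)
    (F₁ F₂ F : Ω → Set (Fin d → ℝ))
    (hF₁ : SetValuedMeasurable H F₁) (hF₂ : SetValuedMeasurable H F₂)
    (hF : SetValuedMeasurable H F)
    (hne₁ : ∀ ω, (F₁ ω).Nonempty) (hne₂ : ∀ ω, (F₂ ω).Nonempty)
    (hne : ∀ ω, (F ω).Nonempty)
    (hcl₁ : ∀ ω, IsClosed (F₁ ω)) (hcl₂ : ∀ ω, IsClosed (F₂ ω))
    (hcl : ∀ ω, IsClosed (F ω))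
    (hsum : ∀ᵐ ω ∂P, F₁ ω + F₂ ω = F ω) :
    ∀ ξ : Ω → Fin d → ℝ,
      (Measurable[H] ξ ∧ ∀ᵐ ω ∂P, ξ ω ∈ F ω) ↔
      ∃ ξ₁ ξ₂ : Ω → Fin d → ℝ,
        Measurable[H] ξ₁ ∧ Measurable[H] ξ₂ ∧
        (∀ᵐ ω ∂P, ξ₁ ω ∈ F₁ ω) ∧ (∀ᵐ ω ∂P, ξ₂ ω ∈ F₂ ω) ∧
        ξ = ξ₁ + ξ₂ := by
  intro ξ
  constructor
  · rintro ⟨hξ, hξF⟩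
    have hgood : ∀ᵐ ω ∂P, ξ ω ∈ F₁ ω + F₂ ω := by
      filter_upwards [hξF, hsum] with ω h1 h2
      rwa [h2]
    obtain ⟨B, hsub, hBm, hB0⟩ := @exists_measurable_superset_of_null _ m P _ (ae_iff.1 hgood)
    obtain ⟨g, hg, hgF⟩ := @aux_exists Ω d H F₁ F₂ hF₁ hF₂ hne₁ hne₂ hcl₁ hcl₂ ξ hξ B
      (hcomplete B hBm hB0) (fun ω hω => by
        by_contra hcon
        exact hω (hsub hcon))
    have hae : ∀ᵐ ω ∂P, ω ∉ B := measure_eq_zero_iff_ae_notMem.1 hB0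
    refine ⟨g, ξ - g, hg, @aux_sub _ _ H _ _ hξ hg, ?_, ?_, ?_⟩
    · filter_upwards [hae] with ω hω using (hgF ω hω).1
    · filter_upwards [hae] with ω hω using (hgF ω hω).2
    · simp
  · rintro ⟨ξ₁, ξ₂, h1, h2, h1F, h2F, rfl⟩
    refine ⟨@aux_add _ _ H _ _ h1 h2, ?_⟩
    filter_upwards [h1F, h2F, hsum] with ω a b c
    rw [← c]
    exact Set.add_mem_add a b
end

section
/- For any nonempty bounded subset A ⊆ ℝ^n, the set H(cl A) is closed and H(cl A) = cl H(A) = cl Ĥ(A), where H(A) = {(λ, λx) : λ ≥ 0, x ∈ A} and Ĥ(A) = {(λ, λx) : λ > 0, x ∈ A} are subsets of ℝ × ℝ^n. -/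
/-- The Hörmander transform of a set `A ⊆ ℝⁿ`:
`H(A) = {(λ, λx) : λ ≥ 0, x ∈ A} ⊆ ℝ × ℝⁿ`. -/
def hormander {n : ℕ} (A : Set (Fin n → ℝ)) : Set (ℝ × (Fin n → ℝ)) :=
  {p | ∃ l : ℝ, ∃ x ∈ A, 0 ≤ l ∧ p = (l, l • x)}

/-- The open variant `Ĥ(A) = {(λ, λx) : λ > 0, x ∈ A}`. -/
def hormanderHat {n : ℕ} (A : Set (Fin n → ℝ)) : Set (ℝ × (Fin n → ℝ)) :=
  {p | ∃ l : ℝ, ∃ x ∈ A, 0 < l ∧ p = (l, l • x)}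

/-- For a nonempty bounded `A ⊆ ℝⁿ`, the set `H(cl A)` is closed and
`H(cl A) = cl H(A) = cl Ĥ(A)`. -/
theorem hormander_closure_of_bounded {n : ℕ} (A : Set (Fin n → ℝ))
    (hne : A.Nonempty) (hbd : Bornology.IsBounded A) :
    IsClosed (hormander (closure A)) ∧
      hormander (closure A) = closure (hormander A) ∧
      closure (hormander A) = closure (hormanderHat A) := by
  have hcl : IsClosed (hormander (closure A)) := by
    have hK : IsCompact (closure A) := hbd.isCompact_closure
    apply IsSeqClosed.isClosed
    intro u p hu hup
    choose l x hx hl he using hu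
    obtain ⟨a, ha, φ, hφ, hlim⟩ := hK.tendsto_subseq hx
    have h1 : Filter.Tendsto (fun k => l (φ k)) Filter.atTop (nhds p.1) := by
      have h := (continuous_fst.tendsto p).comp (hup.comp hφ.tendsto_atTop)
      refine h.congr fun k => ?_
      simp [he (φ k)]
    have h2 : Filter.Tendsto (fun k => l (φ k) • x (φ k)) Filter.atTop (nhds p.2) := by
      have h := (continuous_snd.tendsto p).comp (hup.comp hφ.tendsto_atTop)
      refine h.congr fun k => ?_
      simp [he (φ k)]
    have h3 := tendsto_nhds_unique h2 (h1.smul hlim)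
    exact ⟨p.1, a, ha, ge_of_tendsto' h1 fun k => hl (φ k), Prod.ext rfl h3⟩
  have hsub1 : closure (hormander A) ⊆ hormander (closure A) := by
    apply closure_minimal _ hcl
    rintro p ⟨l, x, hx, hl, rfl⟩
    exact ⟨l, x, subset_closure hx, hl, rfl⟩
  have hsub2 : closure (hormanderHat A) ⊆ closure (hormander A) := by
    apply closure_mono
    rintro p ⟨l, x, hx, hl, rfl⟩
    exact ⟨l, x, hx, hl.le, rfl⟩
  have hsub3 : hormander (closure A) ⊆ closure (hormanderHat A) := by
    rintro p ⟨l, x, hx, hl, rfl⟩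
    have hf : Continuous (fun q : ℝ × (Fin n → ℝ) => (q.1, q.1 • q.2)) := by fun_prop
    have hmem : (l, x) ∈ closure (Set.Ioi (0 : ℝ) ×ˢ A) := by
      rw [closure_prod_eq, closure_Ioi]
      exact ⟨hl, hx⟩
    refine map_mem_closure (f := fun q : ℝ × (Fin n → ℝ) => (q.1, q.1 • q.2)) hf hmem ?_
    rintro ⟨m, y⟩ ⟨hm, hy⟩
    exact ⟨m, y, hy, hm, rfl⟩
  exact ⟨hcl, (hsub3.trans hsub2).antisymm hsub1, (hsub1.trans hsub3).antisymm hsub2⟩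
end

section
/- For any nonempty convex subset A ⊆ ℝ^n, one has ri Ĥ(A) = ri H(A) = Ĥ(ri A), where H(A) = {(λ, λx) : λ ≥ 0, x ∈ A} and Ĥ(A) = {(λ, λx) : λ > 0, x ∈ A} are subsets of ℝ × ℝ^n and ri denotes relative interior. -/
open Filter Topology in
lemma mem_ri_iff {E : Type*} [NormedAddCommGroup E] [NormedSpace ℝ E] (S : Set E) (p : E) :
    p ∈ intrinsicInterior ℝ S ↔
      p ∈ affineSpan ℝ S ∧ ∀ᶠ q in 𝓝[(affineSpan ℝ S : Set E)] p, q ∈ S := by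
  rw [mem_intrinsicInterior]
  constructor
  · rintro ⟨y, hy, rfl⟩
    refine ⟨y.2, ?_⟩
    rw [mem_interior_iff_mem_nhds, mem_nhds_subtype_iff_nhdsWithin] at hy
    filter_upwards [hy] with q hq
    obtain ⟨z, hz, rfl⟩ := hq
    exact hz
  · rintro ⟨hp, h⟩
    refine ⟨⟨p, hp⟩, ?_, rfl⟩
    rw [mem_interior_iff_mem_nhds, mem_nhds_subtype_iff_nhdsWithin]
    filter_upwards [h, self_mem_nhdsWithin] with q hq hq'
    exact ⟨⟨q, hq'⟩, hq, rfl⟩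

lemma span_of_mem {n : ℕ} (A : Set (Fin n → ℝ)) (x : Fin n → ℝ) (hx : x ∈ A) (l : ℝ) :
    (l, l • x) ∈ affineSpan ℝ (hormanderHat A) := by
  have h1 : ((1 : ℝ), (1 : ℝ) • x) ∈ affineSpan ℝ (hormanderHat A) :=
    subset_affineSpan ℝ _ ⟨1, x, hx, one_pos, rfl⟩
  have h2 : ((2 : ℝ), (2 : ℝ) • x) ∈ affineSpan ℝ (hormanderHat A) :=
    subset_affineSpan ℝ _ ⟨2, x, hx, two_pos, rfl⟩
  have := AffineMap.lineMap_mem (l - 1) h1 h2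
  convert this using 1
  rw [AffineMap.lineMap_apply_module]
  ext
  · simp; ring
  · simp; ring

lemma span_of_mem_span {n : ℕ} (A : Set (Fin n → ℝ)) (x : Fin n → ℝ)
    (hx : x ∈ affineSpan ℝ A) (l : ℝ) :
    (l, l • x) ∈ affineSpan ℝ (hormanderHat A) := by
  let f : (Fin n → ℝ) →ᵃ[ℝ] ℝ × (Fin n → ℝ) :=
    (AffineMap.const ℝ _ l).prod (l • (LinearMap.id : (Fin n → ℝ) →ₗ[ℝ] _)).toAffineMap
  have : affineSpan ℝ A ≤ (affineSpan ℝ (hormanderHat A)).comap f := by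
    rw [affineSpan_le]
    intro y hy
    exact span_of_mem A y hy l
  exact this hx

lemma span_hat {n : ℕ} (A : Set (Fin n → ℝ)) (hne : A.Nonempty) (p : ℝ × (Fin n → ℝ))
    (hp : p ∈ affineSpan ℝ (hormanderHat A)) (h0 : p.1 ≠ 0) :
    p.1⁻¹ • p.2 ∈ affineSpan ℝ A := by
  obtain ⟨x, hx⟩ := hne
  have hxs := subset_affineSpan ℝ A hx
  let f : ℝ × (Fin n → ℝ) →ₗ[ℝ] (Fin n → ℝ) :=
    LinearMap.snd ℝ _ _ - (LinearMap.fst ℝ _ _).smulRight x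
  have : affineSpan ℝ (hormanderHat A) ≤
      (((affineSpan ℝ A).direction.comap f).toAffineSubspace) := by
    rw [affineSpan_le]
    rintro _ ⟨l, y, hy, hl, rfl⟩
    change l • y - l • x ∈ (affineSpan ℝ A).direction
    rw [← smul_sub]
    exact Submodule.smul_mem _ _
      (AffineSubspace.vsub_mem_direction (subset_affineSpan ℝ A hy) hxs)
  have h : p.2 - p.1 • x ∈ (affineSpan ℝ A).direction := this hp
  have h2 := AffineSubspace.vadd_mem_of_mem_direction
    (Submodule.smul_mem _ p.1⁻¹ h) hxs
  convert h2 using 1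
  rw [smul_sub, smul_smul, inv_mul_cancel₀ h0]
  simp

open Filter Topology in
lemma ri_between {n : ℕ} (A : Set (Fin n → ℝ)) (hne : A.Nonempty) (S : Set (ℝ × (Fin n → ℝ)))
    (h1 : hormanderHat A ⊆ S) (h2 : S ⊆ hormander A) :
    intrinsicInterior ℝ S = hormanderHat (intrinsicInterior ℝ A) := by
  have hspan : affineSpan ℝ S = affineSpan ℝ (hormanderHat A) := by
    apply le_antisymm
    · rw [affineSpan_le]
      intro p hp
      obtain ⟨l, x, hx, -, rfl⟩ := h2 hp
      exact span_of_mem A x hx l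
    · exact affineSpan_mono ℝ h1
  have tend : ∀ (l : ℝ) (y : Fin n → ℝ),
      Tendsto (fun z : Fin n → ℝ => (l, l • z)) (𝓝[(affineSpan ℝ A : Set _)] y)
        (𝓝[(affineSpan ℝ (hormanderHat A) : Set _)] (l, l • y)) := by
    intro l y
    refine tendsto_nhdsWithin_iff.2 ⟨?_, ?_⟩
    · have : Continuous (fun z : Fin n → ℝ => (l, l • z)) := by fun_prop
      exact (this.tendsto y).mono_left nhdsWithin_le_nhds
    · filter_upwards [self_mem_nhdsWithin] with z hz
      exact span_of_mem_span A z hz l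
  ext p
  rw [mem_ri_iff, hspan]
  constructor
  · rintro ⟨hp, hev⟩
    obtain ⟨l, x, hx, hl, rfl⟩ := h2 (hev.self_of_nhdsWithin hp)
    rcases hl.eq_or_lt with rfl | hl
    · exfalso
      have hc : Continuous (fun t : ℝ => (t, t • x)) := by fun_prop
      have ht : Tendsto (fun t : ℝ => (t, t • x)) (𝓝[<] 0)
          (𝓝[(affineSpan ℝ (hormanderHat A) : Set _)] ((0 : ℝ), (0 : ℝ) • x)) :=
        tendsto_nhdsWithin_iff.2 ⟨(hc.tendsto 0).mono_left nhdsWithin_le_nhds,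
          Eventually.of_forall fun t => span_of_mem A x hx t⟩
      obtain ⟨t, ht1, ht2⟩ := ((ht.eventually hev).and self_mem_nhdsWithin).exists
      obtain ⟨m, y, -, hm, he⟩ := h2 ht1
      have : t = m := congrArg Prod.fst he
      have : t < 0 := ht2
      linarith
    · refine ⟨l, x, ?_, hl, rfl⟩
      rw [mem_ri_iff]
      refine ⟨subset_affineSpan ℝ A hx, ?_⟩
      filter_upwards [(tend l x).eventually hev] with z hz
      obtain ⟨m, y, hy, hm, he⟩ := h2 hz
      have e1 : l = m := congrArg Prod.fst he
      have e2 : l • z = m • y := congrArg Prod.snd he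
      subst e1
      rwa [smul_right_injective _ hl.ne' e2]
  · rintro ⟨l, x, hx, hl, rfl⟩
    rw [mem_ri_iff] at hx
    obtain ⟨hx, hev⟩ := hx
    refine ⟨span_of_mem_span A x hx l, ?_⟩
    have hpos : ∀ᶠ q : ℝ × (Fin n → ℝ) in
        𝓝[(affineSpan ℝ (hormanderHat A) : Set _)] (l, l • x), 0 < q.1 :=
      nhdsWithin_le_nhds
        ((continuous_fst.tendsto (l, l • x)).eventually (lt_mem_nhds hl))
    have ht : Tendsto (fun q : ℝ × (Fin n → ℝ) => q.1⁻¹ • q.2)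
        (𝓝[(affineSpan ℝ (hormanderHat A) : Set _)] (l, l • x))
        (𝓝[(affineSpan ℝ A : Set _)] x) := by
      refine tendsto_nhdsWithin_iff.2 ⟨?_, ?_⟩
      · have : Tendsto (fun q : ℝ × (Fin n → ℝ) => q.1⁻¹ • q.2) (𝓝 (l, l • x))
            (𝓝 (l⁻¹ • (l • x))) :=
          ((continuous_fst.tendsto (l, l • x)).inv₀ hl.ne').smul
            (continuous_snd.tendsto (l, l • x))
        rw [inv_smul_smul₀ hl.ne'] at this
        exact this.mono_left nhdsWithin_le_nhds
      · filter_upwards [self_mem_nhdsWithin, hpos] with q hq hq0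
        exact span_hat A hne q hq hq0.ne'
    filter_upwards [ht.eventually hev, hpos] with q hq hq0
    refine h1 ⟨q.1, _, hq, hq0, ?_⟩
    rw [smul_inv_smul₀ hq0.ne']

/-- For a nonempty convex `A ⊆ ℝⁿ`, `ri Ĥ(A) = ri H(A) = Ĥ(ri A)`,
where `ri` denotes the relative interior. -/
theorem hormander_relativeInterior {n : ℕ} (A : Set (Fin n → ℝ))
    (hne : A.Nonempty) (hconv : Convex ℝ A) :
    intrinsicInterior ℝ (hormanderHat A) = intrinsicInterior ℝ (hormander A) ∧
      intrinsicInterior ℝ (hormander A) = hormanderHat (intrinsicInterior ℝ A) := by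
  have hsub : hormanderHat A ⊆ hormander A := by
    rintro _ ⟨l, x, hx, hl, rfl⟩
    exact ⟨l, x, hx, hl.le, rfl⟩
  have e1 := ri_between A hne (hormanderHat A) subset_rfl hsub
  have e2 := ri_between A hne (hormander A) hsub subset_rfl
  exact ⟨e1.trans e2.symm, e2⟩
end
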